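/- arXiv:2003.07810 — 4 statements merged into one kernel-verified Lean document; each statement's English description precedes it below -/
import Mathlib

section
/- Let v_1, …, v_m ∈ ℝ^n and x ∈ [0,1]^m. Suppose Σ_{i=1}^m x_i v_i v_iᵀ = I_n and ‖v_i‖ ≤ ε ≤ 1 for all i ∈ [m]. Then there exists a subset S ⊆ [m] satisfying (1 − 8ε)·I_n ⪯ Σ_{i ∈ S} v_i v_iᵀ ⪯ (1 + 8ε)·I_n. -/
open Matrix BigOperators

/-!
Round the weights to independent Bernoulli(`xᵢ`) variables `ξᵢ` and put `B = ∑ (ξᵢ - xᵢ) vᵢ vᵢᵀ`.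
The norm of `B` is the largest zero of `det (z - B) det (z + B)`, and by rank-one updates the
expectation of this polynomial over `ξᵢ` amounts to applying `1 - (xᵢ(1 - xᵢ)/2) ∂ᵢ²` to `det (z -
B + ∑ yᵢ vᵢ vᵢᵀ) det (z + B + ∑ yᵢ vᵢ vᵢᵀ)` at `y = 0`. These operators preserve stability, so
every conditional expectation is real-rooted, and deciding the `ξᵢ` one at a time some choice does
not increase the largest zero (interlacing). A barrier argument bounds the largest zero of the
full expectation: on an orthant where the logarithmic derivatives of the polynomial in direction
`i` are at most `φᵢ`, applying the `i`-th operator keeps the polynomial positive and the bounds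
`φ` valid, at the cost of moving the orthant by `xᵢ(1 - xᵢ) φᵢ` in direction `i`.
-/

namespace SpectralRounding

/-! ### Univariate polynomials -/

section Univariate

open Polynomial

lemma degree_lt_of_iterate_derivative_eq_zero {R : Type*} [Semiring R] [IsAddTorsionFree R]
    {P : R[X]} {k : ℕ} (h : derivative^[k] P = 0) : P.degree < k := by
  refine degree_lt_iff_coeff_zero P k |>.2 fun m hm => ?_
  have hcoeff := congr(($h).coeff (m - k))
  rw [coeff_iterate_derivative, Nat.sub_add_cancel hm, coeff_zero] at hcoeff
  exact (nsmul_eq_zero_iff_right (Nat.descFactorial_pos.2 hm).ne').1 hcoeff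

/-- The logarithmic derivative is `∑ 1 / (z - r)` over the roots `r`. -/
lemma im_derivative_div_neg {P : ℂ[X]} (hP : 0 < P.natDegree) {z : ℂ}
    (hz : ∀ r, P.IsRoot r → r.im < z.im) : (P.derivative.eval z / P.eval z).im < 0 := by
  have hne : P.eval z ≠ 0 := fun h => (hz z h).false
  have hroots : P.roots ≠ 0 := by
    rw [← Multiset.card_pos, ← (IsAlgClosed.splits P).natDegree_eq_card_roots]; exact hP
  have hterm : ∀ r ∈ P.roots, (1 / (z - r)).im < 0 := fun r hr => by
    have him : 0 < (z - r).im := by simpa using hz r (isRoot_of_mem_roots hr)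
    rw [one_div, Complex.inv_im]
    refine div_neg_of_neg_of_pos (neg_neg_of_pos him) (Complex.normSq_pos.2 ?_)
    rintro h; simp [h] at him
  rw [(IsAlgClosed.splits P).eval_derivative_div_eval_of_ne_zero hne,
    ← Complex.coe_imAddGroupHom, map_multiset_sum, Multiset.map_map]
  simpa using Multiset.sum_lt_sum_of_nonempty (g := fun _ => (0 : ℝ)) hroots hterm

/-- The function `t ↦ Im (N · conj P)(y + it)` vanishes at `t = 0` and has derivative `N'P - NP'`
there. -/
lemma wronskian_nonpos {N P : ℝ[X]}
    (h : ∀ z : ℂ, 0 < z.im → (aeval z N * star (aeval z P)).im ≤ 0) (y : ℝ) :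
    (wronskian P N).eval y ≤ 0 := by
  let z : ℝ → ℂ := fun t => y + t * Complex.I
  have hz : HasDerivAt z Complex.I 0 :=
    (((hasDerivAt_id (0 : ℝ)).ofReal_comp.mul_const Complex.I).const_add (y : ℂ)).congr_deriv
      (by simp)
  have haeval : ∀ Q : ℝ[X], aeval (z 0) Q = ((Q.eval y : ℝ) : ℂ) := fun Q => by
    have hz0 : z 0 = algebraMap ℝ ℂ y := by simp [z]
    rw [hz0, aeval_algebraMap_apply, coe_aeval_eq_eval, Complex.coe_algebraMap]
  have hderiv : ∀ Q : ℝ[X],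
      HasDerivAt (fun t => aeval (z t) Q) (((Q.derivative.eval y : ℝ) : ℂ) * Complex.I) 0 :=
    fun Q => by
      have hQ := (Q.hasDerivAt_aeval (z 0)).comp 0 hz
      rwa [haeval] at hQ
  have him : HasDerivAt (fun t => (aeval (z t) N * star (aeval (z t) P)).im)
      ((wronskian P N).eval y) 0 := by
    refine (Complex.imCLM.hasFDerivAt.comp_hasDerivAt (0 : ℝ)
      ((hderiv N).mul (hderiv P).star)).congr_deriv ?_
    suffices N.derivative.eval y * P.eval y + -(N.eval y * P.derivative.eval y) =
        (wronskian P N).eval y by simpa [haeval] using this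
    simp only [wronskian, eval_sub, eval_mul]
    ring
  have hslope := him.hasDerivWithinAt (s := Set.Ioi 0)
  rw [hasDerivWithinAt_iff_tendsto_slope' (by simp)] at hslope
  refine le_of_tendsto hslope ?_
  filter_upwards [self_mem_nhdsWithin] with t (ht : 0 < t)
  have h0 : (aeval (z 0) N * star (aeval (z 0) P)).im = 0 := by simp [haeval]
  rw [slope_def_field, h0, sub_zero, sub_zero]
  exact div_nonpos_of_nonpos_of_nonneg (h _ (by simpa [z] using ht)) ht.le

end Univariate

/-! ### Restriction to lines -/

section Line

open MvPolynomial

variable {σ R S : Type*} [CommSemiring R] [CommSemiring S] [Algebra R S]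

/-- The restriction `t ↦ p (pt + t d)` of a multivariate polynomial `p` to the line through `pt`
with direction `d`; the coordinates of `pt` and `d` may lie in an extension of the coefficient
ring. -/
noncomputable def line (pt d : σ → S) : MvPolynomial σ R →ₐ[R] Polynomial S :=
  aeval fun k => Polynomial.C (pt k) + Polynomial.C (d k) * Polynomial.X

lemma line_X (pt d : σ → S) (k : σ) :
    line (R := R) pt d (X k) = Polynomial.C (pt k) + Polynomial.C (d k) * Polynomial.X :=
  aeval_X _ k

lemma aeval_line {A : Type*} [CommSemiring A] [Algebra R A] [Algebra S A] [IsScalarTower R S A]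
    (pt d : σ → S) (p : MvPolynomial σ R) (t : A) :
    Polynomial.aeval t (line pt d p) =
      aeval (fun k => algebraMap S A (pt k) + algebraMap S A (d k) * t) p := by
  have h : ((Polynomial.aeval t).restrictScalars R).comp (line pt d) =
      aeval fun k => algebraMap S A (pt k) + algebraMap S A (d k) * t := by
    ext k
    simp [line]
  exact congr($h p)

lemma eval_line (pt d : σ → S) (p : MvPolynomial σ R) (t : S) :
    (line pt d p).eval t = aeval (fun k => pt k + d k * t) p := by
  simpa using aeval_line pt d p t

lemma eval_zero_line (pt d : σ → S) (p : MvPolynomial σ R) :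
    (line pt d p).eval 0 = aeval pt p := by
  simp [eval_line]

lemma derivative_line (pt : σ → S) {d : σ → S} {s : Finset σ} (hd : ∀ k ∉ s, d k = 0)
    (p : MvPolynomial σ R) :
    (line pt d p).derivative = ∑ k ∈ s, Polynomial.C (d k) * line pt d (pderiv k p) := by
  classical
  induction p using MvPolynomial.induction_on with
  | C a => simp [line, IsScalarTower.algebraMap_apply R S (Polynomial S)]
  | add p q hp hq => simp [hp, hq, mul_add, Finset.sum_add_distrib]
  | mul_X p k hp =>
    have hk : ∀ j, line (R := R) pt d (pderiv j (X k)) = if j = k then 1 else 0 := fun j => by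
      rw [pderiv_X, Pi.single_apply]; split_ifs <;> simp_all
    have hX : (line (R := R) pt d (X k)).derivative = if k ∈ s then Polynomial.C (d k) else 0 := by
      split_ifs with hk <;> simp [line_X, hd, hk]
    simp only [map_mul, map_add, pderiv_mul, Polynomial.derivative_mul, hp, hk, hX, mul_add,
      Finset.sum_add_distrib, Finset.sum_mul, mul_ite, mul_one, mul_zero, mul_assoc,
      Finset.sum_ite_eq', mul_comm (Polynomial.C (d k))]

lemma pderiv_comm (i j : σ) (p : MvPolynomial σ R) :
    pderiv i (pderiv j p) = pderiv j (pderiv i p) := by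
  classical
  induction p using MvPolynomial.induction_on with
  | C a => simp
  | add p q hp hq => simp [hp, hq]
  | mul_X p k hp =>
    have hX : ∀ i j : σ, pderiv i (pderiv j (X k : MvPolynomial σ R)) = 0 := fun i j => by
      rw [pderiv_X, Pi.single_apply]; split_ifs <;> simp
    simp only [pderiv_mul, map_add, hX, hp]
    ring

variable [DecidableEq σ]

lemma eval_line_single (pt : σ → S) (i : σ) (p : MvPolynomial σ R) (t : S) :
    (line pt (Pi.single i 1) p).eval t = aeval (pt + Pi.single i t) p := by
  rw [eval_line]
  congr 2
  ext k
  obtain rfl | hk := eq_or_ne k i <;> simp [*]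

lemma derivative_line_single (pt : σ → S) (i : σ) (p : MvPolynomial σ R) :
    (line pt (Pi.single i 1) p).derivative = line pt (Pi.single i 1) (pderiv i p) := by
  rw [derivative_line pt (s := {i}) (by simp +contextual)]
  simp

end Line

/-! ### Stable polynomials -/

section Stable

open MvPolynomial

variable {ι : Type*}

/-- The points `(z, x)` with `Im z > 0` and `Im xᵢ ≥ 0`, with `z` the coordinate `none` and `xᵢ` the
coordinate `some i`. Unlike the open upper half-plane it is closed under setting `x = 0`, so that
stability passes to the specialization at `x = 0` without a limit. -/
def stabilityRegion (ι : Type*) : Set (Option ι → ℂ) :=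
  {pt | 0 < (pt none).im ∧ ∀ i, 0 ≤ (pt (some i)).im}

/-- A real polynomial in `z` and the `xᵢ` is stable if it has no zero in `stabilityRegion`. -/
def Stable (p : MvPolynomial (Option ι) ℝ) : Prop :=
  ∀ pt ∈ stabilityRegion ι, aeval pt p ≠ 0

lemma add_single_mem_stabilityRegion [DecidableEq ι] {pt : Option ι → ℂ}
    (hpt : pt ∈ stabilityRegion ι) (i : ι) {t : ℂ} (ht : 0 ≤ t.im) :
    pt + Pi.single (some i) t ∈ stabilityRegion ι := by
  refine ⟨by simpa using hpt.1, fun j => ?_⟩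
  obtain rfl | hj := eq_or_ne j i
  · simpa using add_nonneg (hpt.2 j) ht
  · simpa [hj] using hpt.2 j

lemma Stable.mul {p q : MvPolynomial (Option ι) ℝ} (hp : Stable p) (hq : Stable q) :
    Stable (p * q) := fun pt hpt => by
  rw [map_mul]
  exact mul_ne_zero (hp pt hpt) (hq pt hpt)

lemma Stable.im_pderiv_div_neg_or_pderiv_eq_zero {p : MvPolynomial (Option ι) ℝ}
    (hp : Stable p) {pt : Option ι → ℂ} (hpt : pt ∈ stabilityRegion ι) (i : ι) :
    (aeval pt (pderiv (some i) p) / aeval pt p).im < 0 ∨ aeval pt (pderiv (some i) p) = 0 := by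
  classical
  let P : Polynomial ℂ := line pt (Pi.single (some i) 1) p
  have hP' : P.derivative.eval 0 = aeval pt (pderiv (some i) p) := by
    rw [derivative_line_single, eval_zero_line]
  obtain hP | hP := P.natDegree.eq_zero_or_pos
  · right
    rw [← hP', Polynomial.derivative_of_natDegree_zero hP, Polynomial.eval_zero]
  · left
    rw [← hP', ← eval_zero_line pt (Pi.single (some i) 1) p]
    refine im_derivative_div_neg hP fun r hr => lt_of_not_ge fun hr0 => ?_
    rw [Polynomial.IsRoot, eval_line_single] at hr
    exact hp _ (add_single_mem_stabilityRegion hpt i hr0) hr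

/-- A zero of `p + s ∂ᵢp` would make `∂ᵢp / p` a nonzero real number. -/
lemma Stable.add_smul_pderiv {p : MvPolynomial (Option ι) ℝ} (hp : Stable p) (s : ℝ)
    (i : ι) : Stable (p + s • pderiv (some i) p) := fun pt hpt h => by
  rw [map_add, map_smul, Complex.real_smul] at h
  have hne := hp pt hpt
  obtain him | h0 := hp.im_pderiv_div_neg_or_pderiv_eq_zero hpt i
  · have hs : s ≠ 0 := by rintro rfl; simp [hne] at h
    have hreal : aeval pt (pderiv (some i) p) / aeval pt p = ((-1 / s : ℝ) : ℂ) := by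
      have : (s : ℂ) ≠ 0 := by exact_mod_cast hs
      push_cast
      field_simp
      linear_combination h
    rw [hreal, Complex.ofReal_im] at him
    exact him.false
  · simp [h0, hne] at h

/-- The operator `1 - (τ/2) ∂ᵢ²`. On products of two polynomials that are affine in `Xᵢ` it computes
the expectation over a random variable of variance `τ`. -/
noncomputable def meanOp {σ : Type*} (i : σ) (τ : ℝ) :
    MvPolynomial σ ℝ →ₗ[ℝ] MvPolynomial σ ℝ :=
  LinearMap.id - (τ / 2) • ((pderiv i).toLinearMap ∘ₗ (pderiv i).toLinearMap)

lemma meanOp_apply {σ : Type*} (i : σ) (τ : ℝ) (p : MvPolynomial σ ℝ) :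
    meanOp i τ p = p - (τ / 2) • pderiv i (pderiv i p) := rfl

lemma pderiv_meanOp {σ : Type*} (i j : σ) (τ : ℝ) (p : MvPolynomial σ ℝ) :
    pderiv j (meanOp i τ p) = meanOp i τ (pderiv j p) := by
  simp only [meanOp_apply, map_sub, Derivation.map_smul, pderiv_comm j i]

/-- `1 - (τ/2) ∂ᵢ²` factors as `(1 - √(τ/2) ∂ᵢ) (1 + √(τ/2) ∂ᵢ)`. -/
lemma Stable.meanOp {p : MvPolynomial (Option ι) ℝ} (hp : Stable p) (i : ι) {τ : ℝ}
    (hτ : 0 ≤ τ) : Stable (meanOp (some i) τ p) := by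
  convert (hp.add_smul_pderiv (√(τ / 2)) i).add_smul_pderiv (-√(τ / 2)) i using 1
  rw [meanOp_apply, map_add, Derivation.map_smul, smul_add, smul_smul, neg_mul,
    Real.mul_self_sqrt (by positivity)]
  module

lemma Stable.im_pderiv_mul_star_nonpos {p : MvPolynomial (Option ι) ℝ} (hp : Stable p)
    {pt : Option ι → ℂ} (hpt : pt ∈ stabilityRegion ι) (i : ι) :
    (aeval pt (pderiv (some i) p) * star (aeval pt p)).im ≤ 0 := by
  obtain him | h0 := hp.im_pderiv_div_neg_or_pderiv_eq_zero hpt i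
  · have hne := hp pt hpt
    have hnorm : aeval pt (pderiv (some i) p) * star (aeval pt p) =
        aeval pt (pderiv (some i) p) / aeval pt p * (Complex.normSq (aeval pt p) : ℂ) := by
      rw [Complex.normSq_eq_conj_mul_self, starRingEnd_apply]
      field_simp
    rw [hnorm, Complex.im_mul_ofReal]
    exact mul_nonpos_of_nonpos_of_nonneg him.le (Complex.normSq_nonneg _)
  · simp [h0]

/-- This is the sign of the Wronskian of `∂ᵢp` and `p` along a line in the direction `eⱼ`, perturbed
by a small multiple of the `z`-direction that keeps the line inside the stability region. -/
lemma Stable.rayleigh {p : MvPolynomial (Option ι) ℝ} (hp : Stable p)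
    (y : Option ι → ℝ) (i j : ι) :
    eval y p * eval y (pderiv (some j) (pderiv (some i) p)) ≤
      eval y (pderiv (some j) p) * eval y (pderiv (some i) p) := by
  classical
  have hθ : ∀ θ : ℝ, 0 < θ →
      eval y p * (θ * eval y (pderiv none (pderiv (some i) p)) +
        eval y (pderiv (some j) (pderiv (some i) p))) ≤
      (θ * eval y (pderiv none p) + eval y (pderiv (some j) p)) * eval y (pderiv (some i) p) := by
    intro θ hθ
    let d : Option ι → ℝ := Pi.single none θ + Pi.single (some j) 1
    have hd : ∀ q, (line y d q).derivative.eval 0 =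
        θ * eval y (pderiv none q) + eval y (pderiv (some j) q) := fun q => by
      rw [derivative_line y (s := {none, some j}) (by simp +contextual [d])]
      simp [eval_zero_line, d]
    have hw := wronskian_nonpos (N := line y d (pderiv (some i) p)) (P := line y d p)
      (fun z hz => by
        rw [aeval_line, aeval_line]
        refine hp.im_pderiv_mul_star_nonpos ⟨by simpa [d] using mul_pos hθ hz, fun k => ?_⟩ i
        obtain rfl | hk := eq_or_ne k j <;> simp [*, d, hz.le]) 0
    simpa [Polynomial.wronskian, hd, eval_zero_line] using hw
  simpa using ContinuousWithinAt.closure_le (s := Set.Ioi 0) (x := 0) (by simp)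
    (by fun_prop) (by fun_prop) hθ

end Stable

/-! ### Barriers for quadratic polynomials -/

section Quadratic

open Polynomial

variable {P Q : ℝ[X]}

lemma exists_eq_quadratic {R : Type*} [Semiring R] {P : R[X]} (hP : P.degree < 3) :
    ∃ a b c : R, P = C a * X ^ 2 + C b * X + C c :=
  ⟨_, _, _, eq_quadratic_of_degree_le_two (Order.le_of_lt_succ hP)⟩

lemma derivative_quadratic {R : Type*} [CommSemiring R] (a b c : R) :
    (C a * X ^ 2 + C b * X + C c).derivative = C (2 * a) * X + C b := by
  simp only [derivative_add, derivative_C_mul, derivative_X_sq, derivative_C, derivative_X, map_mul,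
    add_zero, mul_one]
  ring

lemma quadratic_coeff_nonneg {a b c : ℝ} (hpos : ∀ u, 0 ≤ u → 0 < a * u ^ 2 + b * u + c)
    (hdiscrim : 0 ≤ discrim a b c) : 0 ≤ a ∧ 0 ≤ b := by
  have ha : 0 ≤ a := by
    by_contra! ha
    have htends := tendsto_atBot_of_leadingCoeff_nonpos (C a * X ^ 2 + C b * X + C c)
      (by rw [degree_quadratic ha.ne]; norm_num) (by rw [leadingCoeff_quadratic ha.ne]; exact ha.le)
    obtain ⟨u, hneg, hu⟩ :=
      ((htends.eventually_lt_atBot 0).and (Filter.eventually_ge_atTop 0)).exists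
    exact (hpos u hu).not_gt (by simpa using hneg)
  refine ⟨ha, le_of_not_gt fun hb => ?_⟩
  obtain rfl | ha := ha.eq_or_lt
  · have hroot := hpos (c / -b) (div_nonneg (by linarith [hpos 0 le_rfl]) (by linarith))
    rw [div_neg, mul_neg, mul_div_cancel₀ _ hb.ne] at hroot
    simp at hroot
  · have hvertex := hpos (-b / (2 * a)) (div_nonneg (by linarith) (by linarith))
    rw [discrim] at hdiscrim
    field_simp at hvertex
    nlinarith

lemma discrim_nonneg_of_logConcave {a b c : ℝ}
    (hlc : ∀ u, (a * u ^ 2 + b * u + c) * (2 * a) ≤ (2 * a * u + b) ^ 2) :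
    0 ≤ discrim a b c := by
  obtain rfl | ha := eq_or_ne a 0
  · simp [discrim, sq_nonneg]
  · have hvertex := hlc (-b / (2 * a))
    rw [discrim]
    field_simp at hvertex
    linarith

/-- This is the Wronskian inequality at `u = -c / b`. -/
lemma quadratic_wronskian_bound {a b c a' b' c' : ℝ} (ha : 0 ≤ a) (hb : 0 ≤ b) (hc : 0 < c)
    (hdiscrim : 0 ≤ discrim a b c) (ha' : 0 < a') (hc' : 0 ≤ c')
    (hW : ∀ u, (2 * a * u + b) * (a' * u ^ 2 + b' * u + c') ≤
      (a * u ^ 2 + b * u + c) * (2 * a' * u + b')) :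
    a' * c ≤ b * b' := by
  have hb : 0 < b := hb.lt_of_ne' fun hb => by
    have ha : a = 0 := by rw [discrim] at hdiscrim; nlinarith
    have hu := hW (-(b' + 1) / (2 * a'))
    have : 2 * a' * (-(b' + 1) / (2 * a')) = -(b' + 1) := by field_simp
    rw [ha, hb, this] at hu
    linarith
  obtain ⟨u, rfl⟩ : ∃ u, c = -(b * u) := ⟨-c / b, by field_simp⟩
  have hu : u < 0 := by nlinarith
  have hdiscrim : 0 ≤ b + 4 * a * u := by
    refine nonneg_of_mul_nonneg_right (a := b) ?_ hb
    rw [discrim] at hdiscrim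
    linarith
  have hau : a * u ≤ 0 := mul_nonpos_of_nonneg_of_nonpos ha hu.le
  have hsum : 0 ≤ b' * (a * u + b) + a' * (b * u) := by
    refine nonneg_of_mul_nonpos_left (b := u) ?_ hu
    have := hW u
    have := mul_nonneg hc' (show 0 ≤ b + 2 * a * u by linarith)
    nlinarith
  have ha'c := mul_pos ha' hc
  have hb' : 0 < b' := pos_of_mul_pos_left (b := a * u + b) (by linarith) (by linarith)
  nlinarith [hb']

variable {ψ τ : ℝ}

lemma eval_sub_smul_derivative_pos (hP : P.degree < 3) (hpos : ∀ u, 0 ≤ u → 0 < P.eval u)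
    (hlc : ∀ u, P.eval u * P.derivative.derivative.eval u ≤ P.derivative.eval u ^ 2)
    (hψ : P.derivative.eval 0 ≤ ψ * P.eval 0) (hτ : 0 ≤ τ) :
    0 < (P - (τ / 2) • P.derivative.derivative).eval (τ * ψ) := by
  obtain ⟨a, b, c, rfl⟩ := exists_eq_quadratic hP
  rw [derivative_quadratic] at hlc hψ ⊢
  simp only [derivative_add, derivative_C_mul, derivative_C, derivative_X,
    eval_sub, eval_add, eval_smul, eval_mul, eval_pow, eval_C, eval_X, smul_eq_mul, mul_zero,
    mul_one, zero_add, add_zero] at hpos hlc hψ ⊢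
  have hdiscrim := discrim_nonneg_of_logConcave hlc
  obtain ⟨ha, hb⟩ := quadratic_coeff_nonneg hpos hdiscrim
  have hc : 0 < c := by simpa using hpos 0 le_rfl
  have haψ : a ≤ b * ψ := by
    refine le_of_mul_le_mul_right ?_ hc
    rw [discrim] at hdiscrim
    nlinarith
  nlinarith [mul_le_mul_of_nonneg_left haψ hτ, mul_nonneg ha (sq_nonneg (τ * ψ))]

lemma eval_sub_smul_derivative_nonneg (hP : P.degree < 3) (hQ : Q.degree < 3)
    (hpos : ∀ u, 0 ≤ u → 0 < P.eval u)
    (hlc : ∀ u, P.eval u * P.derivative.derivative.eval u ≤ P.derivative.eval u ^ 2)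
    (hψ : P.derivative.eval 0 ≤ ψ * P.eval 0) (hτ : 0 ≤ τ) (hQnonneg : ∀ u, 0 ≤ u → 0 ≤ Q.eval u)
    (hW : ∀ u, 0 ≤ (wronskian P Q).eval u) :
    0 ≤ (Q - (τ / 2) • Q.derivative.derivative).eval (τ * ψ) := by
  obtain ⟨a, b, c, rfl⟩ := exists_eq_quadratic hP
  obtain ⟨a', b', c', rfl⟩ := exists_eq_quadratic hQ
  simp only [wronskian, derivative_quadratic] at hlc hψ hW ⊢
  simp only [derivative_add, derivative_C_mul, derivative_C, derivative_X,
    eval_sub, eval_add, eval_smul, eval_mul, eval_pow, eval_C, eval_X, smul_eq_mul, mul_zero,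
    mul_one, zero_add, add_zero, sub_nonneg] at hpos hlc hψ hQnonneg hW ⊢
  have hdiscrim := discrim_nonneg_of_logConcave hlc
  obtain ⟨ha, hb⟩ := quadratic_coeff_nonneg hpos hdiscrim
  have hc : 0 < c := by simpa using hpos 0 le_rfl
  have hc' : 0 ≤ c' := by simpa using hQnonneg 0 le_rfl
  have hψ0 : 0 ≤ ψ := nonneg_of_mul_nonneg_left (hb.trans (by simpa using hψ)) hc
  obtain ha' | ha' := le_or_gt a' 0
  · have := hQnonneg (τ * ψ) (by positivity)
    nlinarith
  · have hbound := quadratic_wronskian_bound ha hb hc hdiscrim ha' hc' hW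
    have hb' : 0 < b' := pos_of_mul_pos_right ((mul_pos ha' hc).trans_le hbound) hb
    have haψ : a' ≤ b' * ψ := by
      refine le_of_mul_le_mul_right ?_ hc
      nlinarith
    nlinarith [mul_le_mul_of_nonneg_left haψ hτ, mul_nonneg ha'.le (sq_nonneg (τ * ψ))]

end Quadratic

/-! ### The barrier argument -/

section Barrier

open MvPolynomial

variable {ι : Type*}

/-- The points `(z, y)` with `z` fixed and `y ≥ w` coordinatewise. -/
def orthant (z : ℝ) (w : ι → ℝ) : Set (Option ι → ℝ) :=
  {y | y none = z ∧ ∀ i, w i ≤ y (some i)}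

/-- The barrier `φ` for `p` above `w`: on the orthant above `w` the polynomial `p` is positive and
its logarithmic derivative in direction `j` is at most `φ j`. -/
def Barrier (z : ℝ) (w φ : ι → ℝ) (p : MvPolynomial (Option ι) ℝ) : Prop :=
  ∀ y ∈ orthant z w, 0 < eval y p ∧ ∀ j, eval y (pderiv (some j) p) ≤ φ j * eval y p

/-- The polynomial has degree at most two in each of the variables `xᵢ`, expressed by derivatives,
with which the operators `meanOp` commute. -/
def DegTwo (p : MvPolynomial (Option ι) ℝ) : Prop :=
  ∀ i, pderiv (some i) (pderiv (some i) (pderiv (some i) p)) = 0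

lemma DegTwo.meanOp {p : MvPolynomial (Option ι) ℝ} (hp : DegTwo p) (i : ι) (τ : ℝ) :
    DegTwo (meanOp (some i) τ p) := fun j => by
  rw [pderiv_meanOp, pderiv_meanOp, pderiv_meanOp, hp j, map_zero]

lemma DegTwo.smul_sub_pderiv {p : MvPolynomial (Option ι) ℝ} (hp : DegTwo p) (s : ℝ) (j : ι) :
    DegTwo (s • p - pderiv (some j) p) := fun i => by
  simp only [map_sub, Derivation.map_smul, pderiv_comm _ (some j), hp i, smul_zero, map_zero,
    sub_zero]

variable [DecidableEq ι]

lemma DegTwo.degree_line_single_lt {p : MvPolynomial (Option ι) ℝ} (hp : DegTwo p)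
    (y : Option ι → ℝ) (i : ι) : (line y (Pi.single (some i) 1) p).degree < 3 := by
  refine degree_lt_of_iterate_derivative_eq_zero (k := 3) ?_
  simp [derivative_line_single, hp i]

lemma add_single_mem_orthant {z : ℝ} {w : ι → ℝ} {y : Option ι → ℝ} {i : ι} {δ : ℝ}
    (hy : y + Pi.single (some i) δ ∈ orthant z (w + Pi.single i δ)) {t : ℝ} (ht : 0 ≤ t) :
    y + Pi.single (some i) t ∈ orthant z w := by
  refine ⟨by simpa using hy.1, fun j => ?_⟩
  have hj := hy.2 j
  obtain rfl | hne := eq_or_ne j i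
  · simp only [Pi.add_apply, Pi.single_eq_same] at hj ⊢
    linarith
  · simpa [hne] using hj

lemma line_meanOp (y : Option ι → ℝ) (i : Option ι) (τ : ℝ) (p : MvPolynomial (Option ι) ℝ) :
    line y (Pi.single i 1) (meanOp i τ p) = line y (Pi.single i 1) p -
      (τ / 2) • (line y (Pi.single i 1) p).derivative.derivative := by
  rw [meanOp_apply, map_sub, map_smul, derivative_line_single, derivative_line_single]

lemma Barrier.meanOp {p : MvPolynomial (Option ι) ℝ} {z : ℝ} {w φ : ι → ℝ} (hb : Barrier z w φ p)
    (hp : Stable p) (hdeg : DegTwo p) (i : ι) {τ : ℝ} (hτ : 0 ≤ τ) :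
    Barrier z (w + Pi.single i (τ * φ i)) φ (meanOp (some i) τ p) := by
  intro y hy
  obtain ⟨y, rfl⟩ : ∃ y₀, y = y₀ + Pi.single (some i) (τ * φ i) :=
    ⟨y - Pi.single (some i) (τ * φ i), (sub_add_cancel _ _).symm⟩
  have hmem := fun t (ht : 0 ≤ t) => add_single_mem_orthant hy ht
  have heval : ∀ q t, (line y (Pi.single (some i) 1) q).eval t =
      eval (y + Pi.single (some i) t) q := fun q t => eval_line_single y (some i) q t
  have hpos : ∀ t, 0 ≤ t → 0 < (line y (Pi.single (some i) 1) p).eval t := fun t ht => by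
    rw [heval]
    exact (hb _ (hmem t ht)).1
  have hlc : ∀ t, (line y (Pi.single (some i) 1) p).eval t *
      (line y (Pi.single (some i) 1) p).derivative.derivative.eval t ≤
      (line y (Pi.single (some i) 1) p).derivative.eval t ^ 2 := fun t => by
    simp only [derivative_line_single, heval, sq]
    exact hp.rayleigh _ i i
  have hφ : (line y (Pi.single (some i) 1) p).derivative.eval 0 ≤
      φ i * (line y (Pi.single (some i) 1) p).eval 0 := by
    rw [derivative_line_single, heval, heval]
    exact (hb _ (hmem 0 le_rfl)).2 i
  refine ⟨?_, fun j => ?_⟩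
  · rw [← heval, line_meanOp]
    exact eval_sub_smul_derivative_pos (hdeg.degree_line_single_lt y i) hpos hlc hφ hτ
  · suffices 0 ≤ (line y (Pi.single (some i) 1)
        (SpectralRounding.meanOp (some i) τ (φ j • p - pderiv (some j) p))).eval (τ * φ i) by
      simpa [heval, pderiv_meanOp, smul_eval] using this
    rw [line_meanOp]
    refine eval_sub_smul_derivative_nonneg (hdeg.degree_line_single_lt y i)
      ((hdeg.smul_sub_pderiv (φ j) j).degree_line_single_lt y i) hpos hlc hφ hτ
      (fun t ht => ?_) (fun t => ?_)
    · simpa [heval, smul_eval] using (hb _ (hmem t ht)).2 j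
    · have hray := hp.rayleigh (y + Pi.single (some i) t) j i
      simp only [Polynomial.wronskian, derivative_line_single, Polynomial.eval_sub,
        Polynomial.eval_mul, heval, map_sub, Derivation.map_smul, smul_eval]
      linarith

end Barrier

/-! ### Determinants of matrix pencils -/

section Determinant

lemma posSemidef_vecMulVec_self {n : Type*} [Finite n] (u : n → ℝ) :
    (vecMulVec u u).PosSemidef := by
  simpa using posSemidef_vecMulVec_self_star u

variable {n : Type*} [Fintype n] [DecidableEq n]

/-- Both sides are the determinant of the block matrix `[M, u; -t w, 1]`, which is affine in its
last row. -/
lemma det_add_smul_vecMulVec {R : Type*} [CommRing R] (M : Matrix n n R) (u w : n → R) (t : R) :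
    (M + t • vecMulVec u w).det = M.det + t * ((M + vecMulVec u w).det - M.det) := by
  let N : Matrix (n ⊕ Unit) (n ⊕ Unit) R := fromBlocks M (replicateCol Unit u) 0 0
  have hN : ∀ s : R, (M + s • vecMulVec u w).det =
      s * (N.updateRow (Sum.inr ()) (Sum.elim (-w) 0)).det +
        (N.updateRow (Sum.inr ()) (Sum.elim 0 1)).det := fun s => by
    have hblock : fromBlocks M (replicateCol Unit u) (-(s • replicateRow Unit w)) 1 =
        N.updateRow (Sum.inr ()) (s • Sum.elim (-w) 0 + Sum.elim (0 : n → R) (1 : Unit → R)) := by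
      ext (i | i) (j | j) <;> simp [N, Matrix.updateRow_apply]
    rw [← det_updateRow_smul, ← det_updateRow_add, ← hblock, det_fromBlocks_one₂₂, Matrix.mul_neg,
      Matrix.mul_smul, sub_neg_eq_add, ← vecMulVec_eq]
  have h0 := hN 0
  have h1 := hN 1
  rw [zero_smul, add_zero] at h0
  rw [one_smul] at h1
  rw [hN, h0, h1]
  ring

lemma posSemidef_dotProduct_smul_one_sub_vecMulVec (u : n → ℝ) :
    ((u ⬝ᵥ u) • (1 : Matrix n n ℝ) - vecMulVec u u).PosSemidef := by
  refine .of_dotProduct_mulVec_nonneg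
    ((isHermitian_one.smul (.all _)).sub (posSemidef_vecMulVec_self u).1) fun x => ?_
  have hCS := Finset.sum_mul_sq_le_sq_mul_sq Finset.univ u x
  simp only [sub_mulVec, smul_mulVec, one_mulVec, vecMulVec_mulVec, dotProduct_sub,
    dotProduct_smul, star_trivial]
  simp only [dotProduct, ← sq, smul_eq_mul, MulOpposite.smul_eq_mul_unop, MulOpposite.unop_op,
    mul_comm (x _)] at hCS ⊢
  linarith

open scoped MatrixOrder in
lemma mul_det_add_vecMulVec_sub_det_le {M : Matrix n n ℝ} {s : ℝ} (hs : 0 < s) (hM : s • 1 ≤ M)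
    (u : n → ℝ) : s * ((M + vecMulVec u u).det - M.det) ≤ (u ⬝ᵥ u) * M.det := by
  obtain rfl | hu := eq_or_ne u 0
  · simp
  have hu : 0 < u ⬝ᵥ u := by simpa using dotProduct_self_star_pos_iff.2 hu
  have hdet : 0 ≤ (M + (-s / (u ⬝ᵥ u)) • vecMulVec u u).det := by
    refine (show PosSemidef _ from ?_).det_nonneg
    convert (Matrix.le_iff.1 hM).add
      ((posSemidef_dotProduct_smul_one_sub_vecMulVec u).smul (div_nonneg hs.le hu.le)) using 1
    rw [smul_sub, smul_smul, div_mul_cancel₀ _ hu.ne', neg_div, neg_smul]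
    abel
  rw [det_add_smul_vecMulVec] at hdet
  field_simp at hdet
  linarith

end Determinant

section Pencil

open MvPolynomial

variable {ι n : Type*} [Fintype ι]

/-- The matrix `z I + B + ∑ xᵢ vᵢ vᵢᵀ` at a point `(z, x)` of a real algebra. -/
def pencil [DecidableEq n] (v : ι → n → ℝ) (B : Matrix n n ℝ) {R : Type*} [CommRing R]
    [Algebra ℝ R] (pt : Option ι → R) : Matrix n n R :=
  pt none • 1 + B.map (algebraMap ℝ R) +
    ∑ i, pt (some i) • (vecMulVec (v i) (v i)).map (algebraMap ℝ R)

variable [Fintype n] [DecidableEq n] (v : ι → n → ℝ) (B : Matrix n n ℝ)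

/-- The polynomial `det (z I + B + ∑ xᵢ vᵢ vᵢᵀ)` in `z` and the `xᵢ`. -/
noncomputable def pencilDet : MvPolynomial (Option ι) ℝ :=
  (pencil v B X).det

lemma aeval_pencilDet {R : Type*} [CommRing R] [Algebra ℝ R] (pt : Option ι → R) :
    aeval pt (pencilDet v B) = (pencil v B pt).det := by
  rw [pencilDet, AlgHom.map_det]
  congr 1
  ext i j
  simp [pencil, Matrix.sum_apply, Matrix.one_apply, apply_ite]

lemma eval_pencilDet (y : Option ι → ℝ) : eval y (pencilDet v B) = (pencil v B y).det :=
  aeval_pencilDet v B y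

omit [Fintype n] in
lemma pencil_add_matrix (A : Matrix n n ℝ) (y : Option ι → ℝ) :
    pencil v (B + A) y = pencil v B y + A := by
  ext i j
  simp only [pencil, Matrix.add_apply, Matrix.map_apply, Algebra.algebraMap_self, RingHom.id_apply]
  ring

omit [Fintype n] in
lemma pencil_add_single [DecidableEq ι] (y : Option ι → ℝ) (i : ι) (t : ℝ) :
    pencil v B (y + Pi.single (some i) t) = pencil v B y + t • vecMulVec (v i) (v i) := by
  ext j k
  simp only [pencil, Pi.add_apply, Pi.single_apply, reduceCtorEq, if_false, add_zero,
    Option.some_inj, add_smul, ite_smul, zero_smul, Finset.sum_add_distrib, Finset.sum_ite_eq',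
    Finset.mem_univ, if_true, Algebra.algebraMap_self, RingHom.coe_id, Matrix.map_id, add_assoc]

lemma line_pencilDet [DecidableEq ι] (y : Option ι → ℝ) (i : ι) :
    line y (Pi.single (some i) 1) (pencilDet v B) = Polynomial.C (pencil v B y).det +
      Polynomial.C ((pencil v B y + vecMulVec (v i) (v i)).det - (pencil v B y).det) *
        Polynomial.X := by
  refine Polynomial.funext fun t => ?_
  rw [eval_line_single, aeval_pencilDet, pencil_add_single, det_add_smul_vecMulVec]
  simp [mul_comm]

lemma eval_pderiv_pencilDet (y : Option ι → ℝ) (i : ι) :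
    eval y (pderiv (some i) (pencilDet v B)) =
      (pencil v B y + vecMulVec (v i) (v i)).det - (pencil v B y).det := by
  classical
  rw [← aeval_eq_eval, ← eval_zero_line y (Pi.single (some i) 1), ← derivative_line_single,
    line_pencilDet]
  simp

lemma pderiv_pderiv_pencilDet (i : ι) :
    pderiv (some i) (pderiv (some i) (pencilDet v B)) = 0 := by
  classical
  refine MvPolynomial.funext fun y => ?_
  rw [← aeval_eq_eval, ← eval_zero_line y (Pi.single (some i) 1), ← derivative_line_single,
    ← derivative_line_single, line_pencilDet]
  simp

lemma pencilDet_add_smul_vecMulVec (i : ι) (ξ : ℝ) :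
    pencilDet v (B + ξ • vecMulVec (v i) (v i)) =
      pencilDet v B + ξ • pderiv (some i) (pencilDet v B) := by
  refine MvPolynomial.funext fun y => ?_
  rw [eval_pencilDet, pencil_add_matrix, det_add_smul_vecMulVec, map_add, smul_eval,
    eval_pderiv_pencilDet, eval_pencilDet]

variable {B}

open scoped ComplexOrder in
/-- For `u` in the kernel of the pencil, `0 = Im (u* (z I + B + ∑ xᵢ vᵢ vᵢᵀ) u) ≥ Im z ‖u‖²`. -/
lemma stable_pencilDet (hB : B.IsHermitian) : Stable (pencilDet v B) := fun pt hpt h => by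
  rw [aeval_pencilDet] at h
  obtain ⟨u, hu, hker⟩ := Matrix.exists_mulVec_eq_zero_iff.2 h
  have hBim : (star u ⬝ᵥ B.map (algebraMap ℝ ℂ) *ᵥ u).im = 0 :=
    (hB.map (algebraMap ℝ ℂ) fun r => (Complex.conj_ofReal r).symm).im_star_dotProduct_mulVec_self u
  have hV : ∀ i, 0 ≤ star u ⬝ᵥ (vecMulVec (v i) (v i)).map (algebraMap ℝ ℂ) *ᵥ u := fun i => by
    have hmap : (vecMulVec (v i) (v i)).map (algebraMap ℝ ℂ) =
        vecMulVec (fun j => (v i j : ℂ)) (star fun j => (v i j : ℂ)) := by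
      ext j k
      simp [vecMulVec_apply]
    rw [hmap]
    exact (posSemidef_vecMulVec_self_star _).dotProduct_mulVec_nonneg u
  have hVim : ∀ i, 0 ≤ (pt (some i) *
      (star u ⬝ᵥ (vecMulVec (v i) (v i)).map (algebraMap ℝ ℂ) *ᵥ u)).im := fun i => by
    obtain ⟨hre, him⟩ := Complex.le_def.1 (hV i)
    rw [Complex.mul_im, ← him]
    simpa using mul_nonneg (hpt.2 i) hre
  have hu : 0 < (pt none * (star u ⬝ᵥ u)).im := by
    obtain ⟨hre, him⟩ := Complex.lt_def.1 (dotProduct_star_self_pos_iff.2 hu)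
    rw [Complex.mul_im, ← him]
    simpa using mul_pos hpt.1 hre
  have him := congr((star u ⬝ᵥ $hker).im)
  simp only [pencil, add_mulVec, smul_mulVec, one_mulVec, sum_mulVec, dotProduct_add,
    dotProduct_smul, dotProduct_sum, dotProduct_zero, smul_eq_mul, Complex.add_im, Complex.im_sum,
    Complex.zero_im, hBim, add_zero] at him
  linarith [Finset.sum_nonneg fun i (_ : i ∈ Finset.univ) => hVim i]

end Pencil

section SymmPencil

open MvPolynomial

variable {ι n : Type*} [Fintype ι] [Fintype n] [DecidableEq n] (v : ι → n → ℝ) (B : Matrix n n ℝ)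

/-- The product `det (z I + B + ∑ xᵢ vᵢ vᵢᵀ) · det (z I - B + ∑ xᵢ vᵢ vᵢᵀ)`. At `x = 0` the
largest modulus of its zeros in `z` is the spectral norm of a symmetric `B`, so that it controls
both ends of the spectrum. -/
noncomputable def symmPencilDet : MvPolynomial (Option ι) ℝ :=
  pencilDet v B * pencilDet v (-B)

lemma degTwo_symmPencilDet : DegTwo (symmPencilDet v B) := fun i => by
  simp [symmPencilDet, Derivation.leibniz, pderiv_pderiv_pencilDet]

/-- The random shift has opposite signs in the two factors, which are affine in `xᵢ`, so only the
variance term survives. -/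
lemma smul_symmPencilDet_add_smul_symmPencilDet (i : ι) (s : ℝ) :
    s • symmPencilDet v (B + vecMulVec (v i) (v i)) + (1 - s) • symmPencilDet v B =
      meanOp (some i) (s * (1 - s)) (symmPencilDet v (B + s • vecMulVec (v i) (v i))) := by
  have hshift : ∀ ξ : ℝ, symmPencilDet v (B + ξ • vecMulVec (v i) (v i)) =
      (pencilDet v B + ξ • pderiv (some i) (pencilDet v B)) *
        (pencilDet v (-B) - ξ • pderiv (some i) (pencilDet v (-B))) := fun ξ => by
    rw [symmPencilDet, neg_add, ← neg_smul, pencilDet_add_smul_vecMulVec,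
      pencilDet_add_smul_vecMulVec, neg_smul, sub_eq_add_neg]
  have hone := hshift 1
  rw [one_smul] at hone
  rw [meanOp_apply, hshift, hone, symmPencilDet]
  simp only [Derivation.leibniz, smul_eq_mul, map_add, map_sub, Derivation.map_smul,
    pderiv_pderiv_pencilDet, smul_zero, mul_zero, add_zero, sub_zero, zero_add]
  algebra

variable {v B}

lemma stable_symmPencilDet (hB : B.IsHermitian) : Stable (symmPencilDet v B) :=
  (stable_pencilDet v hB).mul (stable_pencilDet v hB.neg)

open scoped MatrixOrder in
lemma barrier_symmPencilDet_zero_of_le_pencil {s z : ℝ} {w : ι → ℝ} (hs : 0 < s)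
    (hpencil : ∀ y ∈ orthant z w, s • 1 ≤ pencil v 0 y) :
    Barrier z w (fun j => 2 * (v j ⬝ᵥ v j) / s) (symmPencilDet v 0) := fun y hy => by
  have hM := hpencil y hy
  have hpos : 0 < (pencil v 0 y).det := by
    have hdef := (PosDef.one (n := n) (R := ℝ)).smul hs |>.add_posSemidef (Matrix.le_iff.1 hM)
    rw [add_sub_cancel] at hdef
    exact hdef.det_pos
  refine ⟨?_, fun j => ?_⟩
  · simpa only [symmPencilDet, neg_zero, map_mul, eval_pencilDet] using mul_pos hpos hpos
  simp only [symmPencilDet, neg_zero, Derivation.leibniz, smul_eq_mul, map_add, map_mul,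
    eval_pencilDet, eval_pderiv_pencilDet]
  have hj := mul_le_mul_of_nonneg_right (mul_det_add_vecMulVec_sub_det_le hs hM (v j)) hpos.le
  rw [div_mul_eq_mul_div, le_div_iff₀ hs]
  linarith

open scoped MatrixOrder in
lemma half_smul_one_le_pencil {c z : ℝ} (hc : 0 ≤ c) (hz : c < z) {τ : ι → ℝ}
    (hvar : ∑ i, (τ i * (v i ⬝ᵥ v i)) • vecMulVec (v i) (v i) ≤ (c ^ 2 / 8) • 1)
    {y : Option ι → ℝ} (hy : y ∈ orthant z fun i => -(τ i * (4 * (v i ⬝ᵥ v i) / z))) :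
    (z / 2) • 1 ≤ pencil v 0 y := by
  obtain ⟨rfl, hyw⟩ := hy
  have hz0 : 0 < y none := hc.trans_lt hz
  have hnonneg : PosSemidef (∑ i, (y (some i) + τ i * (4 * (v i ⬝ᵥ v i) / y none)) •
      vecMulVec (v i) (v i)) := posSemidef_sum _ fun i _ =>
    (posSemidef_vecMulVec_self (v i)).smul (by linarith [hyw i])
  have hsplit : ∑ i, (y (some i) + τ i * (4 * (v i ⬝ᵥ v i) / y none)) • vecMulVec (v i) (v i) =
      ∑ i, y (some i) • vecMulVec (v i) (v i) +
        (4 / y none) • ∑ i, (τ i * (v i ⬝ᵥ v i)) • vecMulVec (v i) (v i) := by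
    rw [Finset.smul_sum, ← Finset.sum_add_distrib]
    refine Finset.sum_congr rfl fun i _ => ?_
    rw [smul_smul, ← add_smul]
    congr 2
    ring
  have hscalar : 0 ≤ y none / 2 - 4 / y none * (c ^ 2 / 8) := by
    field_simp
    nlinarith
  have hdecomp : pencil v 0 y - (y none / 2) • 1 =
      ∑ i, (y (some i) + τ i * (4 * (v i ⬝ᵥ v i) / y none)) • vecMulVec (v i) (v i) +
        (4 / y none) •
          ((c ^ 2 / 8) • 1 - ∑ i, (τ i * (v i ⬝ᵥ v i)) • vecMulVec (v i) (v i)) +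
        (y none / 2 - 4 / y none * (c ^ 2 / 8)) • 1 := by
    rw [hsplit, pencil, Matrix.map_zero _ (map_zero _)]
    simp only [Algebra.algebraMap_self, RingHom.coe_id, Matrix.map_id]
    module
  rw [Matrix.le_iff] at hvar ⊢
  rw [hdecomp]
  exact (hnonneg.add (hvar.smul (by positivity))).add (PosSemidef.one.smul hscalar)

open scoped MatrixOrder in
lemma barrier_symmPencilDet_zero {c z : ℝ} (hc : 0 ≤ c) (hz : c < z) {τ : ι → ℝ}
    (hvar : ∑ i, (τ i * (v i ⬝ᵥ v i)) • vecMulVec (v i) (v i) ≤ (c ^ 2 / 8) • 1) :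
    Barrier z (fun i => -(τ i * (4 * (v i ⬝ᵥ v i) / z))) (fun i => 4 * (v i ⬝ᵥ v i) / z)
      (symmPencilDet v 0) := by
  convert barrier_symmPencilDet_zero_of_le_pencil (half_pos (hc.trans_lt hz))
    fun y hy => half_smul_one_le_pencil hc hz hvar hy using 2
  ring

end SymmPencil

/-! ### Interlacing -/

section Interlacing

open Polynomial

lemma convex_monic_natDegree (d : ℕ) : Convex ℝ {f : ℝ[X] | f.Monic ∧ f.natDegree = d} := by
  rintro f ⟨hf, rfl⟩ g ⟨hg, hgd⟩ a b - - hab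
  have hcoeff : (a • f + b • g).coeff f.natDegree = 1 := by
    rw [coeff_add, coeff_smul, coeff_smul, hf.coeff_natDegree, ← hgd, hg.coeff_natDegree,
      smul_eq_mul, smul_eq_mul, mul_one, mul_one, hab]
  have hdeg : (a • f + b • g).natDegree ≤ f.natDegree :=
    natDegree_add_le_of_degree_le (natDegree_smul_le _ _) ((natDegree_smul_le _ _).trans hgd.le)
  exact ⟨monic_of_natDegree_le_of_coeff_eq_one _ hdeg hcoeff,
    natDegree_eq_of_le_of_coeff_ne_zero hdeg (hcoeff ▸ one_ne_zero)⟩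

lemma eventually_eval_pos {f : ℝ[X]} (hf : f.Monic) : ∀ᶠ t in Filter.atTop, 0 < f.eval t := by
  obtain hd | hd := f.natDegree.eq_zero_or_pos
  · simp [eq_one_of_monic_natDegree_zero hf hd]
  · refine (f.tendsto_atTop_of_leadingCoeff_nonneg (natDegree_pos_iff_degree_pos.1 hd)
      ?_).eventually_gt_atTop 0
    simp [hf.leadingCoeff]

lemma sub_pow_natDegree_le_eval {f : ℝ[X]} (hf : f.Monic) (hsplits : f.Splits) {c : ℝ}
    (hpos : ∀ t, c ≤ t → 0 < f.eval t) {t : ℝ} (ht : c ≤ t) :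
    (t - c) ^ f.natDegree ≤ f.eval t := by
  rw [hsplits.eval_eq_prod_roots_of_monic hf, hsplits.natDegree_eq_card_roots,
    ← Multiset.prod_replicate, ← Multiset.map_const']
  refine Multiset.prod_map_le_prod_map₀ _ _ (fun _ _ => sub_nonneg.2 ht) fun r hr => ?_
  have hrc : r < c := lt_of_not_ge fun hcr => (hpos r hcr).ne' (isRoot_of_mem_roots hr)
  linarith

lemma exists_first_contact {f h : ℝ → ℝ} (hf : Continuous f) (hh : Continuous h) {c t : ℝ}
    (hpos : ∀ u, c ≤ u → 0 < h u) (hlim : ∀ᶠ u in Filter.atTop, 0 < f u) (ht : c ≤ t)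
    (hft : f t ≤ 0) :
    ∃ κ, 0 ≤ κ ∧ (∀ u, c ≤ u → 0 ≤ f u + κ * h u) ∧ ∃ u, c ≤ u ∧ f u + κ * h u = 0 := by
  have hfar : ∀ᶠ u in Filter.cocompact ℝ ⊓ Filter.principal (Set.Ici c),
      f t / h t ≤ f u / h u := by
    rw [Filter.eventually_inf_principal, cocompact_eq_atBot_atTop, Filter.eventually_sup]
    refine ⟨(Filter.eventually_lt_atBot c).mono fun u hu hcu => absurd hcu hu.not_ge,
      hlim.mono fun u hu hcu => ?_⟩
    exact (div_nonpos_of_nonpos_of_nonneg hft (hpos t ht).le).trans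
      (div_pos hu (hpos u hcu)).le
  obtain ⟨u, hu, hmin⟩ := ContinuousOn.exists_isMinOn'
    (hf.continuousOn.div hh.continuousOn fun u hu => (hpos u hu).ne') isClosed_Ici ht hfar
  refine ⟨-(f u / h u), neg_nonneg.2 ((hmin ht).trans
    (div_nonpos_of_nonpos_of_nonneg hft (hpos t ht).le)), fun w hw => ?_, u, hu, ?_⟩
  · have hmul : f u / h u * h w ≤ f w := (le_div_iff₀ (hpos w hw)).1 (hmin hw)
    linarith
  · rw [neg_mul, div_mul_cancel₀ _ (hpos u hu).ne', add_neg_cancel]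

variable {f g h : ℝ[X]}

/-- Moving from `h` towards `f`, a polynomial of the segment first touches zero, at some `t₀ > c`.
Just before, it is positive on `[c, ∞)`, hence at least `(t₀ - c) ^ d` at `t₀`. -/
lemma eval_pos_of_segment_splits (hf : f.Monic) (hh : h.Monic) (hdeg : f.natDegree = h.natDegree)
    (hsplits : ∀ k ∈ segment ℝ h f, k.Splits) {c : ℝ} (hpos : ∀ t, c ≤ t → 0 < h.eval t)
    (hfc : 0 < f.eval c) (t : ℝ) (ht : c ≤ t) : 0 < f.eval t := by
  by_contra! hft
  obtain ⟨κ, hκ, hnonneg, t₀, ht₀, hzero⟩ := exists_first_contact f.continuous h.continuous hpos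
    (eventually_eval_pos hf) ht hft
  have hct₀ : c < t₀ := ht₀.lt_of_ne fun hct₀ => by
    subst hct₀
    linarith [mul_nonneg hκ (hpos c le_rfl).le]
  have hh₀ := hpos t₀ ht₀
  have hδ : 0 < (t₀ - c) ^ h.natDegree := pow_pos (sub_pos.2 hct₀) _
  obtain ⟨η, hη, hηδ⟩ : ∃ η > 0, η * h.eval t₀ = (t₀ - c) ^ h.natDegree :=
    ⟨_, div_pos hδ hh₀, div_mul_cancel₀ _ hh₀.ne'⟩
  have hw : 0 < 1 + κ + η := by positivity
  let k := ((κ + η) / (1 + κ + η)) • h + (1 / (1 + κ + η)) • f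
  have hk : k ∈ segment ℝ h f :=
    ⟨_, _, by positivity, by positivity, by field_simp; ring, rfl⟩
  have heval : ∀ u, k.eval u = (f.eval u + κ * h.eval u + η * h.eval u) / (1 + κ + η) := fun u => by
    simp only [k, eval_add, eval_smul, smul_eq_mul]
    field_simp
    ring
  obtain ⟨hkm, hkd⟩ := (convex_monic_natDegree h.natDegree).segment_subset ⟨hh, rfl⟩ ⟨hf, hdeg⟩ hk
  have hle := sub_pow_natDegree_le_eval hkm (hsplits k hk) (c := c) (fun u hu => by
    rw [heval]
    exact div_pos (add_pos_of_nonneg_of_pos (hnonneg u hu) (mul_pos hη (hpos u hu))) hw) ht₀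
  rw [heval, hzero, zero_add, hηδ, hkd, le_div_iff₀ hw] at hle
  nlinarith

lemma eval_pos_of_mem_segment_of_eval_nonpos (hf : f.Monic) (hg : g.Monic)
    (hdeg : f.natDegree = g.natDegree) (hsplits : ∀ k ∈ segment ℝ f g, k.Splits)
    (hh : h ∈ segment ℝ f g) {c : ℝ} (hpos : ∀ t, c ≤ t → 0 < h.eval t) (hfc : f.eval c ≤ 0)
    (t : ℝ) (ht : c ≤ t) : 0 < g.eval t := by
  obtain ⟨hhm, hhd⟩ := (convex_monic_natDegree g.natDegree).segment_subset ⟨hf, hdeg⟩ ⟨hg, rfl⟩ hh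
  refine eval_pos_of_segment_splits hg hhm hhd.symm (fun k hk => hsplits k ?_) hpos ?_ t ht
  · exact (convex_segment f g).segment_subset hh (right_mem_segment ℝ f g) hk
  · obtain ⟨a, b, ha, hb, -, rfl⟩ := hh
    have hc := hpos c le_rfl
    simp only [eval_add, eval_smul, smul_eq_mul] at hc
    exact pos_of_mul_pos_right (by linarith [mul_nonpos_of_nonneg_of_nonpos ha hfc]) hb

lemma eval_pos_or_eval_pos_of_mem_segment (hf : f.Monic) (hg : g.Monic)
    (hdeg : f.natDegree = g.natDegree) (hsplits : ∀ k ∈ segment ℝ f g, k.Splits)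
    (hh : h ∈ segment ℝ f g) {c : ℝ} (hpos : ∀ t, c < t → 0 < h.eval t) :
    (∀ t, c < t → 0 < f.eval t) ∨ (∀ t, c < t → 0 < g.eval t) := by
  by_contra! ⟨⟨t, ht, hft⟩, u, hu, hgu⟩
  obtain htu | hut := le_total t u
  · exact hgu.not_gt (eval_pos_of_mem_segment_of_eval_nonpos hf hg hdeg hsplits hh
      (fun s hs => hpos s (ht.trans_le hs)) hft u htu)
  · rw [segment_symm] at hsplits hh
    exact hft.not_gt (eval_pos_of_mem_segment_of_eval_nonpos hg hf hdeg.symm hsplits hh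
      (fun s hs => hpos s (hu.trans_le hs)) hgu t hut)

end Interlacing

/-! ### The expected polynomial -/

section ExpectedPoly

open MvPolynomial

variable {ι n : Type*}

lemma bernoulli_variance_nonneg {x : ι → ℝ} (hx : ∀ i, 0 ≤ x i ∧ x i ≤ 1) :
    0 ≤ fun i => x i * (1 - x i) :=
  fun i => mul_nonneg (hx i).1 (sub_nonneg.2 (hx i).2)

lemma splits_of_aeval_ne_zero {f : Polynomial ℝ}
    (hf : ∀ z : ℂ, 0 < z.im → Polynomial.aeval z f ≠ 0) : f.Splits := by
  refine .of_splits_map (algebraMap ℝ ℂ) (IsAlgClosed.splits _) fun z hz => ⟨z.re, ?_⟩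
  have hroot : Polynomial.aeval z f = 0 := by
    rw [← Polynomial.eval_map_algebraMap]
    exact Polynomial.isRoot_of_mem_roots hz
  obtain him | him | him := lt_trichotomy z.im 0
  · refine absurd ?_ (hf (starRingEnd ℂ z) (by simpa using him))
    rw [Polynomial.aeval_conj, hroot, map_zero]
  · exact Complex.ext rfl him.symm
  · exact absurd hroot (hf z him)

/-- The composition of the operators `meanOp (some i) (τ i)` over `i ∈ L`. -/
noncomputable def iteratedMeanOp (τ : ι → ℝ) :
    List ι → MvPolynomial (Option ι) ℝ →ₗ[ℝ] MvPolynomial (Option ι) ℝ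
  | [] => LinearMap.id
  | i :: L => iteratedMeanOp τ L ∘ₗ meanOp (some i) (τ i)

variable [DecidableEq ι]

/-- The specialization at `x = 0`, a polynomial in `z` alone. -/
noncomputable def specialize : MvPolynomial (Option ι) ℝ →ₐ[ℝ] Polynomial ℝ :=
  line (0 : Option ι → ℝ) (Pi.single none 1)

lemma eval_specialize (p : MvPolynomial (Option ι) ℝ) (z : ℝ) :
    (specialize p).eval z = eval (Pi.single none z) p := by
  rw [specialize, eval_line_single, zero_add]
  rfl

lemma Stable.splits_specialize {p : MvPolynomial (Option ι) ℝ} (hp : Stable p) :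
    (specialize p).Splits := splits_of_aeval_ne_zero fun z hz => by
  rw [specialize, aeval_line]
  exact hp _ ⟨by simpa using hz, by simp⟩

omit [DecidableEq ι] in
lemma Stable.iteratedMeanOp {τ : ι → ℝ} (hτ : 0 ≤ τ) (L : List ι)
    {p : MvPolynomial (Option ι) ℝ} (hp : Stable p) : Stable (iteratedMeanOp τ L p) := by
  induction L generalizing p with
  | nil => exact hp
  | cons i _ ih => exact ih (hp.meanOp i (hτ i))

lemma Barrier.iteratedMeanOp {τ : ι → ℝ} (hτ : 0 ≤ τ) (L : List ι)
    {p : MvPolynomial (Option ι) ℝ} (hp : Stable p) (hdeg : DegTwo p) {z : ℝ} {w φ : ι → ℝ}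
    (hb : Barrier z w φ p) :
    Barrier z (w + (L.map fun i => Pi.single i (τ i * φ i)).sum) φ (iteratedMeanOp τ L p) := by
  induction L generalizing p w with
  | nil =>
    rw [List.map_nil, List.sum_nil, add_zero]
    exact hb
  | cons i L ih =>
    rw [List.map_cons, List.sum_cons, ← add_assoc]
    exact ih (hp.meanOp i (hτ i)) (hdeg.meanOp i (τ i)) (hb.meanOp hp hdeg i (hτ i))

variable [Fintype ι] [Fintype n] [DecidableEq n] (v : ι → n → ℝ) (x : ι → ℝ)

lemma specialize_pencilDet (A : Matrix n n ℝ) : specialize (pencilDet v A) = (-A).charpoly := by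
  rw [specialize, line, aeval_pencilDet, charpoly]
  congr 1
  ext1 i j
  simp [pencil, charmatrix_apply, diagonal_apply, one_apply]

lemma monic_specialize_symmPencilDet (A : Matrix n n ℝ) :
    (specialize (symmPencilDet v A)).Monic := by
  rw [symmPencilDet, map_mul, specialize_pencilDet, specialize_pencilDet]
  exact (charpoly_monic _).mul (charpoly_monic _)

lemma natDegree_specialize_symmPencilDet (A : Matrix n n ℝ) :
    (specialize (symmPencilDet v A)).natDegree = Fintype.card n + Fintype.card n := by
  rw [symmPencilDet, map_mul, specialize_pencilDet, specialize_pencilDet,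
    (charpoly_monic _).natDegree_mul (charpoly_monic _), charpoly_natDegree_eq_dim,
    charpoly_natDegree_eq_dim]

/-- The expectation of `symmPencilDet v (A + ∑ (ξᵢ - xᵢ) vᵢ vᵢᵀ)` at `x = 0`, for independent
Bernoulli(`xᵢ`) variables `ξᵢ`, `i ∈ L`, in the form of differential operators. -/
noncomputable def expectedPoly (L : List ι) (A : Matrix n n ℝ) : Polynomial ℝ :=
  specialize (iteratedMeanOp (fun i => x i * (1 - x i)) L (symmPencilDet v A))

lemma smul_expectedPoly_add_smul_expectedPoly (i : ι) (L : List ι) (A : Matrix n n ℝ) (s : ℝ) :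
    s • expectedPoly v x L (A + vecMulVec (v i) (v i)) + (1 - s) • expectedPoly v x L A =
      specialize (iteratedMeanOp (fun i => x i * (1 - x i)) L
        (meanOp (some i) (s * (1 - s)) (symmPencilDet v (A + s • vecMulVec (v i) (v i))))) := by
  simp only [expectedPoly, ← map_smul, ← map_add, smul_symmPencilDet_add_smul_symmPencilDet]

lemma expectedPoly_cons (i : ι) (L : List ι) (A : Matrix n n ℝ) :
    expectedPoly v x (i :: L) A =
      x i • expectedPoly v x L (A - x i • vecMulVec (v i) (v i) + vecMulVec (v i) (v i)) +
        (1 - x i) • expectedPoly v x L (A - x i • vecMulVec (v i) (v i)) := by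
  rw [smul_expectedPoly_add_smul_expectedPoly, sub_add_cancel]
  rfl

variable {x}

lemma expectedPoly_cons_mem_segment (hx : ∀ i, 0 ≤ x i ∧ x i ≤ 1) (i : ι) (L : List ι)
    (A : Matrix n n ℝ) :
    expectedPoly v x (i :: L) A ∈ segment ℝ
      (expectedPoly v x L (A - x i • vecMulVec (v i) (v i) + vecMulVec (v i) (v i)))
      (expectedPoly v x L (A - x i • vecMulVec (v i) (v i))) :=
  ⟨x i, 1 - x i, (hx i).1, sub_nonneg.2 (hx i).2, add_sub_cancel _ _,
    (expectedPoly_cons v x i L A).symm⟩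

lemma monic_natDegree_expectedPoly (hx : ∀ i, 0 ≤ x i ∧ x i ≤ 1) (L : List ι)
    (A : Matrix n n ℝ) :
    (expectedPoly v x L A).Monic ∧
      (expectedPoly v x L A).natDegree = Fintype.card n + Fintype.card n := by
  induction L generalizing A with
  | nil => exact ⟨monic_specialize_symmPencilDet v A, natDegree_specialize_symmPencilDet v A⟩
  | cons i L ih =>
    exact (convex_monic_natDegree _).segment_subset (ih _) (ih _)
      (expectedPoly_cons_mem_segment v hx i L A)

lemma splits_of_mem_segment_expectedPoly (hx : ∀ i, 0 ≤ x i ∧ x i ≤ 1) (i : ι) (L : List ι)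
    {A : Matrix n n ℝ} (hA : A.IsHermitian) {k : Polynomial ℝ}
    (hk : k ∈ segment ℝ (expectedPoly v x L (A + vecMulVec (v i) (v i))) (expectedPoly v x L A)) :
    k.Splits := by
  obtain ⟨a, b, ha, hb, hab, rfl⟩ := hk
  obtain rfl : b = 1 - a := by linarith
  rw [smul_expectedPoly_add_smul_expectedPoly]
  have hAa := hA.add ((posSemidef_vecMulVec_self (v i)).smul ha).isHermitian
  exact (((stable_symmPencilDet hAa).meanOp i (mul_nonneg ha hb)).iteratedMeanOp
    (bernoulli_variance_nonneg hx) L).splits_specialize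

lemma exists_sublist_expectedPoly_nil_pos (hx : ∀ i, 0 ≤ x i ∧ x i ≤ 1) {c : ℝ} (L : List ι)
    {A : Matrix n n ℝ} (hA : A.IsHermitian)
    (hpos : ∀ z, c < z → 0 < (expectedPoly v x L A).eval z) :
    ∃ S : List ι, S.Sublist L ∧ ∀ z, c < z → 0 < (expectedPoly v x [] (A +
      (S.map fun i => vecMulVec (v i) (v i)).sum -
        (L.map fun i => x i • vecMulVec (v i) (v i)).sum)).eval z := by
  induction L generalizing A with
  | nil => exact ⟨[], .slnil, by simpa using hpos⟩
  | cons i L ih =>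
    have hV := (posSemidef_vecMulVec_self (v i)).isHermitian
    have hB : (A - x i • vecMulVec (v i) (v i)).IsHermitian :=
      hA.sub ((posSemidef_vecMulVec_self (v i)).smul (hx i).1).isHermitian
    have hmonic := fun B => monic_natDegree_expectedPoly v hx L B
    obtain h | h := eval_pos_or_eval_pos_of_mem_segment (hmonic _).1 (hmonic _).1
      ((hmonic _).2.trans (hmonic _).2.symm)
      (fun k hk => splits_of_mem_segment_expectedPoly v hx i L hB hk)
      (expectedPoly_cons_mem_segment v hx i L A) hpos
    · obtain ⟨S, hSL, hS⟩ := ih (hB.add hV) h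
      refine ⟨i :: S, hSL.cons_cons i, fun z hz => ?_⟩
      convert hS z hz using 3
      simp only [List.map_cons, List.sum_cons]
      abel
    · obtain ⟨S, hSL, hS⟩ := ih hB h
      refine ⟨S, hSL.cons i, fun z hz => ?_⟩
      convert hS z hz using 3
      simp only [List.map_cons, List.sum_cons]
      abel

open scoped MatrixOrder in
lemma eval_expectedPoly_univ_pos (hx : ∀ i, 0 ≤ x i ∧ x i ≤ 1) {c z : ℝ} (hc : 0 ≤ c) (hz : c < z)
    (hvar : ∑ i, (x i * (1 - x i) * (v i ⬝ᵥ v i)) • vecMulVec (v i) (v i) ≤ (c ^ 2 / 8) • 1) :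
    0 < (expectedPoly v x Finset.univ.toList 0).eval z := by
  have hb := (barrier_symmPencilDet_zero hc hz hvar).iteratedMeanOp
    (bernoulli_variance_nonneg hx) Finset.univ.toList
    (stable_symmPencilDet isHermitian_zero) (degTwo_symmPencilDet v 0)
  rw [Finset.sum_map_toList, Finset.univ_sum_single] at hb
  rw [expectedPoly, eval_specialize]
  exact (hb _ ⟨by simp, fun i => by simp⟩).1

open scoped MatrixOrder in
lemma exists_finset_eval_specialize_symmPencilDet_pos (hx : ∀ i, 0 ≤ x i ∧ x i ≤ 1) {c : ℝ}
    (hc : 0 ≤ c)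
    (hvar : ∑ i, (x i * (1 - x i) * (v i ⬝ᵥ v i)) • vecMulVec (v i) (v i) ≤ (c ^ 2 / 8) • 1) :
    ∃ S : Finset ι, ∀ z, c < z → 0 < (specialize (symmPencilDet v
      (∑ i ∈ S, vecMulVec (v i) (v i) - ∑ i, x i • vecMulVec (v i) (v i)))).eval z := by
  obtain ⟨S, hSuniv, hS⟩ := exists_sublist_expectedPoly_nil_pos v hx Finset.univ.toList
    isHermitian_zero fun z hz => eval_expectedPoly_univ_pos v hx hc hz hvar
  refine ⟨S.toFinset, ?_⟩
  rwa [List.sum_toFinset _ ((Finset.nodup_toList _).sublist hSuniv), ← Finset.sum_map_toList,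
    ← zero_add (List.sum _)]

end ExpectedPoly

/-! ### Rounding -/

section Rounding

variable {ι n : Type*} [Fintype n] [DecidableEq n]

lemma posSemidef_add_smul_one_of_det_ne_zero {B : Matrix n n ℝ} (hB : B.IsHermitian) {c : ℝ}
    (hdet : ∀ z, c < z → (z • (1 : Matrix n n ℝ) + B).det ≠ 0) :
    (B + c • (1 : Matrix n n ℝ)).PosSemidef := by
  have hH : (B + c • (1 : Matrix n n ℝ)).IsHermitian :=
    hB.add (isHermitian_one.smul (IsSelfAdjoint.all c))
  refine hH.posSemidef_iff_eigenvalues_nonneg.2 fun k =>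
    le_of_not_gt fun (hneg : hH.eigenvalues k < 0) => ?_
  refine hdet (c - hH.eigenvalues k) (by linarith) (exists_mulVec_eq_zero_iff.1
    ⟨hH.eigenvectorBasis k, ?_, ?_⟩)
  · exact fun h0 => hH.eigenvectorBasis.orthonormal.ne_zero k (WithLp.ofLp_injective 2 h0)
  · have heigen := hH.mulVec_eigenvectorBasis k
    rw [add_mulVec, smul_mulVec, one_mulVec] at heigen ⊢
    rw [sub_smul, ← heigen]
    abel

lemma eval_specialize_pencilDet [Fintype ι] [DecidableEq ι] (v : ι → n → ℝ) (B : Matrix n n ℝ)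
    (z : ℝ) : (specialize (pencilDet v B)).eval z = (z • (1 : Matrix n n ℝ) + B).det := by
  rw [specialize_pencilDet, eval_charpoly, sub_neg_eq_add, smul_one_eq_diagonal]
  rfl

lemma posSemidef_of_eval_specialize_symmPencilDet_pos [Fintype ι] [DecidableEq ι]
    (v : ι → n → ℝ) {B : Matrix n n ℝ} (hB : B.IsHermitian) {c : ℝ}
    (hpos : ∀ z, c < z → 0 < (specialize (symmPencilDet v B)).eval z) :
    (B + c • (1 : Matrix n n ℝ)).PosSemidef ∧ (-B + c • (1 : Matrix n n ℝ)).PosSemidef := by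
  simp only [symmPencilDet, map_mul, Polynomial.eval_mul, eval_specialize_pencilDet] at hpos
  exact ⟨posSemidef_add_smul_one_of_det_ne_zero hB fun z hz => left_ne_zero_of_mul (hpos z hz).ne',
    posSemidef_add_smul_one_of_det_ne_zero hB.neg fun z hz => right_ne_zero_of_mul (hpos z hz).ne'⟩

lemma variance_smul_one_sub_sum_posSemidef [Fintype ι] {v : ι → n → ℝ} {x : ι → ℝ} {ε : ℝ}
    (hx : ∀ i, 0 ≤ x i) (hsum : ∑ i, x i • vecMulVec (v i) (v i) = 1)
    (hv : ∀ i, v i ⬝ᵥ v i ≤ ε ^ 2) :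
    (ε ^ 2 • (1 : Matrix n n ℝ) -
      ∑ i, (x i * (1 - x i) * (v i ⬝ᵥ v i)) • vecMulVec (v i) (v i)).PosSemidef := by
  rw [← hsum, Finset.smul_sum, ← Finset.sum_sub_distrib]
  refine posSemidef_sum _ fun i _ => ?_
  rw [smul_smul, ← sub_smul]
  refine (posSemidef_vecMulVec_self (v i)).smul ?_
  have hvi : 0 ≤ v i ⬝ᵥ v i := dotProduct_star_self_nonneg (v i)
  nlinarith [mul_nonneg (hx i) (sub_nonneg.2 (hv i)), mul_nonneg (mul_nonneg (hx i) (hx i)) hvi]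

end Rounding

end SpectralRounding

open SpectralRounding

/-- The hypothesis on `c` says that the variance `∑ xᵢ(1 - xᵢ)‖vᵢ‖² vᵢ vᵢᵀ` of the random matrix
`∑ ξᵢ vᵢ vᵢᵀ`, with `ξᵢ` independent Bernoulli(`xᵢ`), is at most `c² / 8`. -/
theorem two_sided_spectral_rounding_subset_general {ι n : Type*} [Fintype ι] [Fintype n]
    [DecidableEq n] (v : ι → n → ℝ) (x : ι → ℝ) {c : ℝ} (hc : 0 ≤ c)
    (hx : ∀ i, 0 ≤ x i ∧ x i ≤ 1)
    (hvar : ((c ^ 2 / 8) • (1 : Matrix n n ℝ) -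
      ∑ i, (x i * (1 - x i) * (v i ⬝ᵥ v i)) • vecMulVec (v i) (v i)).PosSemidef) :
    ∃ S : Finset ι,
      (∑ i ∈ S, vecMulVec (v i) (v i) -
        (∑ i, x i • vecMulVec (v i) (v i) - c • (1 : Matrix n n ℝ))).PosSemidef ∧
      (∑ i, x i • vecMulVec (v i) (v i) + c • (1 : Matrix n n ℝ) -
        ∑ i ∈ S, vecMulVec (v i) (v i)).PosSemidef := by
  classical
  obtain ⟨S, hS⟩ := exists_finset_eval_specialize_symmPencilDet_pos v hx hc (le_iff.2 hvar)
  have hV := fun i => posSemidef_vecMulVec_self (v i)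
  have hB : (∑ i ∈ S, vecMulVec (v i) (v i) -
      ∑ i, x i • vecMulVec (v i) (v i)).IsHermitian :=
    (posSemidef_sum _ fun i _ => hV i).isHermitian.sub
      (posSemidef_sum _ fun i _ => (hV i).smul (hx i).1).isHermitian
  obtain ⟨hlower, hupper⟩ := posSemidef_of_eval_specialize_symmPencilDet_pos v hB hS
  rw [sub_add] at hlower
  rw [neg_sub, sub_add_eq_add_sub] at hupper
  exact ⟨S, hlower, hupper⟩

/-- **Two-sided spectral rounding without cost (Corollary of Kyng–Luh–Song).**
If `∑ xᵢ vᵢ vᵢᵀ = Iₙ` with `x ∈ [0,1]^m` and `‖vᵢ‖ ≤ ε ≤ 1` for all `i`, then there is a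
subset `S ⊆ [m]` with `(1 - 8ε) Iₙ ⪯ ∑_{i ∈ S} vᵢ vᵢᵀ ⪯ (1 + 8ε) Iₙ`. -/
theorem two_sided_spectral_rounding_subset {n m : ℕ} (v : Fin m → Fin n → ℝ)
    (x : Fin m → ℝ) (ε : ℝ)
    (hx : ∀ i, 0 ≤ x i ∧ x i ≤ 1)
    (hsum : (∑ i, x i • vecMulVec (v i) (v i)) = (1 : Matrix (Fin n) (Fin n) ℝ))
    (hv : ∀ i, Real.sqrt (∑ j, v i j ^ 2) ≤ ε)
    (hε : ε ≤ 1) :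
    ∃ S : Finset (Fin m),
      ((∑ i ∈ S, vecMulVec (v i) (v i)) - (1 - 8*ε) • (1 : Matrix (Fin n) (Fin n) ℝ)).PosSemidef ∧
      ((1 + 8*ε) • (1 : Matrix (Fin n) (Fin n) ℝ) - ∑ i ∈ S, vecMulVec (v i) (v i)).PosSemidef := by
  obtain _ | _ := isEmpty_or_nonempty (Fin n)
  · have hzero : ∀ A : Matrix (Fin n) (Fin n) ℝ, A.PosSemidef :=
      fun A => Subsingleton.elim 0 A ▸ .zero
    exact ⟨∅, hzero _, hzero _⟩
  have hm : Nonempty (Fin m) := by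
    by_contra! _
    simp at hsum
  have hε0 : 0 ≤ ε := (Real.sqrt_nonneg _).trans (hv hm.some)
  have hv2 : ∀ i, v i ⬝ᵥ v i ≤ ε ^ 2 := fun i => by
    simpa only [dotProduct, sq] using (Real.sqrt_le_left hε0).1 (hv i)
  have hvar := (variance_smul_one_sub_sum_posSemidef (fun i => (hx i).1) hsum hv2).add
    (PosSemidef.one.smul (show 0 ≤ 7 * ε ^ 2 by positivity))
  obtain ⟨S, hlower, hupper⟩ := two_sided_spectral_rounding_subset_general v x
    (c := 8 * ε) (by positivity) hx (by convert hvar using 1; module)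
  rw [hsum] at hlower hupper
  exact ⟨S, by simpa only [sub_smul, one_smul] using hlower,
    by simpa only [add_smul, one_smul] using hupper⟩
end

section
/- Let v_1, …, v_m ∈ ℝ^n, x ∈ [0,1]^m, and c ∈ ℝ_+^m with ⟨c, x⟩ > 0, and let λ > 0 and l ≥ 0. Suppose ‖Σ_{i=1}^m x_i v_i v_iᵀ‖_op ≤ λ and ‖v_i‖ ≤ l for all i ∈ [m]. Then there exists a choice of signs s_1, …, s_m ∈ {−1, +1} such that, defining u_i ∈ ℝ^{n+1} to be the vector whose first n coordinates equal v_i and whose last coordinate equals s_i·√(c_i·λ/⟨c, x⟩), one has ‖Σ_{i=1}^m x_i u_i u_iᵀ‖_op ≤ λ + l·√λ. -/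
/-!
In block form, `∑ xᵢ uᵢ uᵢᵀ` has upper left block `∑ xᵢ vᵢ vᵢᵀ ⪯ λ I`, lower right entry
`∑ xᵢ aᵢ² = λ`, where `aᵢ = √(cᵢ λ / ⟨c, x⟩)`, and off-diagonal column `w = ∑ sᵢ xᵢ aᵢ vᵢ`.
For uniformly random signs `‖w‖²` has mean `∑ xᵢ² aᵢ² ‖vᵢ‖² ≤ l² ∑ xᵢ aᵢ² = l² λ`, so some choice
of signs has `‖w‖ ≤ l √λ`. The off-diagonal part then contributes at most
`2 τ ⟨w, z⟩ ≤ ‖w‖ (‖z‖² + τ²) ≤ l √λ (‖z‖² + τ²)` to the quadratic form at `(z, τ)`.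
Since the matrix is positive semidefinite, this upper bound on the quadratic form bounds its norm.
-/

open Matrix BigOperators

/-- For a real symmetric `n × n` matrix `M`, `OpNormLE M t` expresses that the operator
norm of `M` (the largest absolute value of an eigenvalue) is at most `t`, via the
equivalent positive-semidefinite sandwich `-t Iₙ ⪯ M ⪯ t Iₙ`. -/
def OpNormLE {n : ℕ} (M : Matrix (Fin n) (Fin n) ℝ) (t : ℝ) : Prop :=
  (t • (1 : Matrix (Fin n) (Fin n) ℝ) - M).PosSemidef ∧
  (M + t • (1 : Matrix (Fin n) (Fin n) ℝ)).PosSemidef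

open Real WithLp
open scoped RealInnerProductSpace

section InnerProductSpace

variable {ι E : Type*} [SeminormedAddCommGroup E] [InnerProductSpace ℝ E]

lemma exists_sign_norm_add_smul_sq_le (w p : E) :
    ∃ e : ℝ, (e = 1 ∨ e = -1) ∧ ‖w + e • p‖ ^ 2 ≤ ‖w‖ ^ 2 + ‖p‖ ^ 2 := by
  rcases le_total ⟪w, p⟫ 0 with h | h
  · exact ⟨1, .inl rfl, by rw [one_smul, norm_add_sq_real]; linarith⟩
  · exact ⟨-1, .inr rfl, by rw [neg_one_smul, ← sub_eq_add_neg, norm_sub_sq_real]; linarith⟩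

-- The signs are chosen greedily, which derandomizes the expectation over uniformly random signs.
lemma exists_signs_norm_sum_smul_sq_le (t : Finset ι) (p : ι → E) :
    ∃ s : ι → ℝ, (∀ i, s i = 1 ∨ s i = -1) ∧
      ‖∑ i ∈ t, s i • p i‖ ^ 2 ≤ ∑ i ∈ t, ‖p i‖ ^ 2 := by
  classical
  induction t using Finset.induction_on with
  | empty => exact ⟨1, fun _ ↦ .inl rfl, by simp⟩
  | insert k t hk ih =>
    obtain ⟨s, hs, hle⟩ := ih
    obtain ⟨e, he, hadd⟩ := exists_sign_norm_add_smul_sq_le (∑ i ∈ t, s i • p i) (p k)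
    have hupdate : ∑ i ∈ t, Function.update s k e i • p i = ∑ i ∈ t, s i • p i :=
      Finset.sum_congr rfl fun i hi ↦ by
        rw [Function.update_of_ne (ne_of_mem_of_not_mem hi hk)]
    refine ⟨Function.update s k e, fun i ↦ ?_, ?_⟩
    · rcases eq_or_ne i k with rfl | hik
      · simpa using he
      · simpa [hik] using hs i
    · rw [Finset.sum_insert hk, Finset.sum_insert hk, hupdate, Function.update_self,
        add_comm (e • p k)]
      linarith

lemma two_mul_mul_inner_le (w z : E) (τ : ℝ) : 2 * τ * ⟪w, z⟫ ≤ ‖w‖ * (‖z‖ ^ 2 + τ ^ 2) :=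
  calc 2 * τ * ⟪w, z⟫ = 2 * (τ * ⟪w, z⟫) := mul_assoc _ _ _
    _ ≤ 2 * (|τ| * |⟪w, z⟫|) := by
        rw [← abs_mul]
        gcongr
        exact le_abs_self _
    _ ≤ 2 * (|τ| * (‖w‖ * ‖z‖)) := by
        gcongr
        exact abs_real_inner_le_norm w z
    _ = ‖w‖ * (2 * ‖z‖ * |τ|) := by ring
    _ ≤ ‖w‖ * (‖z‖ ^ 2 + τ ^ 2) := by
        rw [← sq_abs τ]
        gcongr
        exact two_mul_le_add_sq _ _

variable [Fintype ι]

lemma sum_mul_inner_add_mul_sq (v : ι → E) (x b : ι → ℝ) (z : E) (τ : ℝ) :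
    ∑ i, x i * (⟪v i, z⟫ + b i * τ) ^ 2 =
      ∑ i, x i * ⟪v i, z⟫ ^ 2 + 2 * τ * ⟪∑ i, (x i * b i) • v i, z⟫
        + (∑ i, x i * b i ^ 2) * τ ^ 2 := by
  simp only [sum_inner, real_inner_smul_left, Finset.mul_sum, Finset.sum_mul,
    ← Finset.sum_add_distrib]
  exact Finset.sum_congr rfl fun i _ ↦ by ring

lemma sum_norm_mul_smul_sq_le {v : ι → E} {x a : ι → ℝ} {l : ℝ} (hx : ∀ i, 0 ≤ x i ∧ x i ≤ 1)
    (hv : ∀ i, ‖v i‖ ≤ l) :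
    ∑ i, ‖(x i * a i) • v i‖ ^ 2 ≤ l ^ 2 * ∑ i, x i * a i ^ 2 := by
  rw [Finset.mul_sum]
  refine Finset.sum_le_sum fun i _ ↦ ?_
  obtain ⟨hx0, hx1⟩ := hx i
  calc ‖(x i * a i) • v i‖ ^ 2 = ‖v i‖ ^ 2 * (x i ^ 2 * a i ^ 2) := by
        rw [norm_smul, norm_eq_abs, mul_pow, sq_abs]; ring
    _ ≤ l ^ 2 * (x i * a i ^ 2) := by
        gcongr
        · exact hv i
        · exact pow_le_of_le_one hx0 hx1 two_ne_zero

theorem exists_signs_norm_sum_mul_smul_le {v : ι → E} {x a : ι → ℝ} {lam l : ℝ}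
    (hx : ∀ i, 0 ≤ x i ∧ x i ≤ 1) (ha : ∑ i, x i * a i ^ 2 ≤ lam) (hl : 0 ≤ l)
    (hv : ∀ i, ‖v i‖ ≤ l) :
    ∃ s : ι → ℝ, (∀ i, s i = 1 ∨ s i = -1) ∧
      ‖∑ i, (x i * (s i * a i)) • v i‖ ≤ l * √lam := by
  obtain ⟨s, hs, hle⟩ :=
    exists_signs_norm_sum_smul_sq_le Finset.univ fun i ↦ (x i * a i) • v i
  refine ⟨s, hs, ?_⟩
  have hsq : ‖∑ i, (x i * (s i * a i)) • v i‖ ^ 2 ≤ l ^ 2 * lam :=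
    calc ‖∑ i, (x i * (s i * a i)) • v i‖ ^ 2 = ‖∑ i, s i • (x i * a i) • v i‖ ^ 2 := by
          simp only [smul_smul, mul_left_comm]
      _ ≤ l ^ 2 * ∑ i, x i * a i ^ 2 := hle.trans (sum_norm_mul_smul_sq_le hx hv)
      _ ≤ l ^ 2 * lam := by gcongr
  simpa [sqrt_mul (sq_nonneg l), sqrt_sq hl] using le_sqrt_of_sq_le hsq

theorem sum_mul_inner_add_mul_sq_le {v : ι → E} {x b : ι → ℝ} {lam r : ℝ}
    (hv : ∀ z, ∑ i, x i * ⟪v i, z⟫ ^ 2 ≤ lam * ‖z‖ ^ 2) (hb : ∑ i, x i * b i ^ 2 ≤ lam)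
    (hr : ‖∑ i, (x i * b i) • v i‖ ≤ r) (z : E) (τ : ℝ) :
    ∑ i, x i * (⟪v i, z⟫ + b i * τ) ^ 2 ≤ (lam + r) * (‖z‖ ^ 2 + τ ^ 2) := by
  rw [sum_mul_inner_add_mul_sq]
  have hcross : 2 * τ * ⟪∑ i, (x i * b i) • v i, z⟫ ≤ r * (‖z‖ ^ 2 + τ ^ 2) :=
    (two_mul_mul_inner_le _ z τ).trans (by gcongr)
  calc _ ≤ lam * ‖z‖ ^ 2 + r * (‖z‖ ^ 2 + τ ^ 2) + lam * τ ^ 2 :=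
        add_le_add (add_le_add (hv z) hcross) (by gcongr)
    _ = (lam + r) * (‖z‖ ^ 2 + τ ^ 2) := by ring

end InnerProductSpace

section QuadraticForm

lemma inner_toLp_snoc {n : ℕ} (v z : Fin n → ℝ) (a τ : ℝ) :
    ⟪toLp 2 (Fin.snoc v a : Fin (n + 1) → ℝ), toLp 2 (Fin.snoc z τ : Fin (n + 1) → ℝ)⟫ =
      ⟪toLp 2 v, toLp 2 z⟫ + a * τ := by
  simp [EuclideanSpace.inner_toLp_toLp, dotProduct, Fin.sum_univ_castSucc, mul_comm]

lemma norm_toLp_snoc_sq {n : ℕ} (z : Fin n → ℝ) (τ : ℝ) :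
    ‖toLp 2 (Fin.snoc z τ : Fin (n + 1) → ℝ)‖ ^ 2 = ‖toLp 2 z‖ ^ 2 + τ ^ 2 := by
  rw [← real_inner_self_eq_norm_sq, inner_toLp_snoc, real_inner_self_eq_norm_sq, sq τ]

variable {ι κ : Type*} [Fintype ι]

lemma posSemidef_sum_smul_vecMulVec [Finite κ] (u : ι → κ → ℝ) {x : ι → ℝ}
    (hx : ∀ i, 0 ≤ x i) :
    (∑ i, x i • vecMulVec (u i) (u i)).PosSemidef :=
  posSemidef_sum _ fun i _ ↦ (posSemidef_vecMulVec_self_star (u i)).smul (hx i)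

lemma dotProduct_sum_smul_vecMulVec_mulVec [Fintype κ] (u : ι → κ → ℝ) (x : ι → ℝ) (y : κ → ℝ) :
    y ⬝ᵥ ((∑ i, x i • vecMulVec (u i) (u i)) *ᵥ y) =
      ∑ i, x i * ⟪toLp 2 (u i), toLp 2 y⟫ ^ 2 := by
  rw [sum_mulVec, dotProduct_sum]
  refine Finset.sum_congr rfl fun i _ ↦ ?_
  simp [smul_mulVec, vecMulVec_mulVec, EuclideanSpace.inner_toLp_toLp, dotProduct_comm, sq]

lemma opNormLE_iff_of_posSemidef {n : ℕ} {M : Matrix (Fin n) (Fin n) ℝ} (hM : M.PosSemidef)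
    {t : ℝ} (ht : 0 ≤ t) :
    OpNormLE M t ↔ ∀ y, y ⬝ᵥ (M *ᵥ y) ≤ t * ‖toLp 2 y‖ ^ 2 := by
  have hlower : (M + t • (1 : Matrix (Fin n) (Fin n) ℝ)).PosSemidef :=
    hM.add (PosSemidef.one.smul ht)
  have hherm : (t • (1 : Matrix (Fin n) (Fin n) ℝ) - M).IsHermitian :=
    (PosSemidef.one.smul ht).isHermitian.sub hM.isHermitian
  rw [OpNormLE, and_iff_left hlower, posSemidef_iff_dotProduct_mulVec, and_iff_right hherm]
  refine forall_congr' fun y ↦ ?_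
  rw [star_trivial, sub_mulVec, dotProduct_sub, sub_nonneg, smul_mulVec, one_mulVec,
    dotProduct_smul, smul_eq_mul, ← real_inner_self_eq_norm_sq, EuclideanSpace.inner_toLp_toLp,
    star_trivial]

lemma opNormLE_sum_smul_vecMulVec_iff {n : ℕ} (u : ι → Fin n → ℝ) {x : ι → ℝ}
    (hx : ∀ i, 0 ≤ x i) {t : ℝ} (ht : 0 ≤ t) :
    OpNormLE (∑ i, x i • vecMulVec (u i) (u i)) t ↔
      ∀ y, ∑ i, x i * ⟪toLp 2 (u i), toLp 2 y⟫ ^ 2 ≤ t * ‖toLp 2 y‖ ^ 2 := by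
  simp only [opNormLE_iff_of_posSemidef (posSemidef_sum_smul_vecMulVec u hx) ht,
    dotProduct_sum_smul_vecMulVec_mulVec]

end QuadraticForm

lemma sum_mul_sqrt_div_sq {ι : Type*} [Fintype ι] {x c : ι → ℝ} {lam : ℝ} (hc : ∀ i, 0 ≤ c i)
    (hcx : 0 < ∑ i, c i * x i) (hlam : 0 ≤ lam) :
    ∑ i, x i * √(c i * lam / ∑ j, c j * x j) ^ 2 = lam :=
  calc ∑ i, x i * √(c i * lam / ∑ j, c j * x j) ^ 2
      = ∑ i, c i * x i * (lam / ∑ j, c j * x j) := by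
        refine Finset.sum_congr rfl fun i _ ↦ ?_
        rw [sq_sqrt (div_nonneg (mul_nonneg (hc i) hlam) hcx.le)]
        ring
    _ = lam := by rw [← Finset.sum_mul, mul_div_cancel₀ _ hcx.ne']

theorem signing_trick_general {ι : Type*} [Fintype ι] {n : ℕ} (v : ι → Fin n → ℝ) (x a : ι → ℝ)
    {lam l : ℝ} (hx : ∀ i, 0 ≤ x i ∧ x i ≤ 1) (ha : ∑ i, x i * a i ^ 2 ≤ lam) (hl : 0 ≤ l)
    (hop : OpNormLE (∑ i, x i • vecMulVec (v i) (v i)) lam)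
    (hv : ∀ i, √(∑ j, v i j ^ 2) ≤ l) :
    ∃ s : ι → ℝ, (∀ i, s i = 1 ∨ s i = -1) ∧
      OpNormLE
        (∑ i, x i • vecMulVec (Fin.snoc (v i) (s i * a i)) (Fin.snoc (v i) (s i * a i)))
        (lam + l * √lam) := by
  have hx0 (i) : 0 ≤ x i := (hx i).1
  have hlam : 0 ≤ lam := (Finset.sum_nonneg fun i _ ↦ mul_nonneg (hx0 i) (sq_nonneg _)).trans ha
  have hnorm (i) : ‖toLp 2 (v i)‖ ≤ l := by simpa [EuclideanSpace.norm_eq] using hv i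
  obtain ⟨s, hs, hw⟩ := exists_signs_norm_sum_mul_smul_le hx ha hl hnorm
  refine ⟨s, hs, (opNormLE_sum_smul_vecMulVec_iff _ hx0 (by positivity)).2 fun y ↦ ?_⟩
  have hs_sq (i) : s i ^ 2 = 1 := sq_eq_one_iff.2 (hs i)
  have hsa : ∑ i, x i * (s i * a i) ^ 2 ≤ lam := by simpa only [mul_pow, hs_sq, one_mul] using ha
  rw [← Fin.snoc_init_self y]
  simp only [inner_toLp_snoc, norm_toLp_snoc_sq]
  exact sum_mul_inner_add_mul_sq_le
    (fun z ↦ (opNormLE_sum_smul_vecMulVec_iff v hx0 hlam).1 hop (ofLp z)) hsa hw _ _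

/-- **The signing trick.** If `‖∑ xᵢ vᵢ vᵢᵀ‖_op ≤ λ` and `‖vᵢ‖ ≤ l` for all `i`, and
`⟨c, x⟩ > 0`, then there are signs `sᵢ ∈ {±1}` such that, appending the coordinate
`sᵢ √(cᵢ λ / ⟨c, x⟩)` to `vᵢ` to form `uᵢ ∈ ℝ^{n+1}`, one has
`‖∑ xᵢ uᵢ uᵢᵀ‖_op ≤ λ + l √λ`. -/
theorem signing_trick {n m : ℕ} (v : Fin m → Fin n → ℝ) (x c : Fin m → ℝ) (lam l : ℝ)
    (hx : ∀ i, 0 ≤ x i ∧ x i ≤ 1)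
    (hc : ∀ i, 0 ≤ c i)
    (hcx : 0 < ∑ i, c i * x i)
    (hlam : 0 < lam) (hl : 0 ≤ l)
    (hop : OpNormLE (∑ i, x i • vecMulVec (v i) (v i)) lam)
    (hv : ∀ i, Real.sqrt (∑ j, v i j ^ 2) ≤ l) :
    ∃ s : Fin m → ℝ, (∀ i, s i = 1 ∨ s i = -1) ∧
      OpNormLE
        (∑ i, x i • vecMulVec
          (Fin.snoc (v i) (s i * Real.sqrt (c i * lam / ∑ j, c j * x j)))
          (Fin.snoc (v i) (s i * Real.sqrt (c i * lam / ∑ j, c j * x j))))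
        (lam + l * Real.sqrt lam) :=
  signing_trick_general v x _ hx (sum_mul_sqrt_div_sq hc hcx hlam.le).le hl hop hv
end

section
/- Let (Ω, F, P) be a probability space and let (Y_t)_{t ≥ 0} be a sequence of real-valued random variables; set X_t := Y_t − Y_{t−1} for t ≥ 1 and let G_{t−1} denote the σ-algebra generated by Y_0, …, Y_{t−1}. Suppose there exist γ ∈ (0, 1/2], β_u ≥ 0, β_l ≥ 0, and σ > 0 such that for all t ≥ 1, almost surely: (1) |X_t| ≤ 1; (2) −γ·Y_{t−1} − β_l ≤ E[X_t | G_{t−1}] ≤ −γ·Y_{t−1} + β_u; (3) E[X_t² | G_{t−1}] ≤ γ·Y_{t−1} + σ; and (4) for every a ∈ [−1, 1], E[exp(a·Y_0)] ≤ exp(a²·σ/γ). Then for every η > 0 and every t ≥ 0: P[Y_t ≥ β_u/γ + η] ≤ exp(−η² / (4(σ + β_u)/γ + 2η)) and P[Y_t ≤ −β_l/γ − η] ≤ exp(−η² / (4σ/γ + η)). -/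
open MeasureTheory

/-!
For `|x| ≤ 1` we have `exp x ≤ 1 + x + x²`, so the exponential moments of one increment are
controlled by its conditional drift and second moment. Both are affine in the current value, which
yields the recursion

`E[exp (a Y_{t+1})] ≤ exp (γ (|a| b + a² s)) * E[exp (a (1 - γ (1 - a)) Y_t)]`

with `s = σ / γ` and `b = β_u / γ` or `β_l / γ`, according to the sign of `a`. The parameter moves
towards `0`, and `φ a = |a| b + a² A` is a supersolution of this recursion: with `A = s` on
`[-1, 0]`, and on `[0, l]` as soon as `s + b ≤ A (1 - l)`. Chernoff's bound then gives the two
tails. The exponent `-a η + a² A` is minimal at `a = η / (2 A)`; taking this point as `l` turns the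
constraint into `s + b + η / 2 ≤ A`, which is where the term `2 η` in the upper tail comes from.
-/

section

open Set ProbabilityTheory

variable {Ω : Type*} {m m0 : MeasurableSpace Ω} {μ : Measure Ω}

lemma integrable_exp_add_of_abs_le_one {U Z : Ω → ℝ} (hZ : AEStronglyMeasurable Z μ)
    (hZ1 : ∀ᵐ ω ∂μ, |Z ω| ≤ 1) (hU : Integrable (fun ω => Real.exp (U ω)) μ) :
    Integrable (fun ω => Real.exp (U ω + Z ω)) μ := by
  simp only [Real.exp_add]
  refine hU.mul_bdd (c := Real.exp 1) (Real.continuous_exp.comp_aestronglyMeasurable hZ) ?_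
  filter_upwards [hZ1] with ω hω
  simpa only [Real.norm_eq_abs, Real.abs_exp] using Real.exp_le_exp.2 (le_of_abs_le hω)

lemma condExp_exp_le [IsFiniteMeasure μ] (hm : m ≤ m0) {Z : Ω → ℝ}
    (hZ : AEStronglyMeasurable Z μ) (hZ1 : ∀ᵐ ω ∂μ, |Z ω| ≤ 1) :
    μ[fun ω => Real.exp (Z ω) | m] ≤ᵐ[μ]
      fun ω => Real.exp ((μ[Z | m]) ω + (μ[fun ω' => Z ω' ^ 2 | m]) ω) := by
  have hZi : Integrable Z μ := .of_bound hZ 1 hZ1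
  have hZ2i : Integrable (fun ω => Z ω ^ 2) μ := by
    refine .of_bound (hZ.pow 2) 1 ?_
    filter_upwards [hZ1] with ω hω
    simpa using hω
  have hexpi : Integrable (fun ω => Real.exp (Z ω)) μ := by
    simpa using integrable_exp_add_of_abs_le_one (U := 0) hZ hZ1 (by simp)
  have hexp : (fun ω => Real.exp (Z ω)) ≤ᵐ[μ] (fun _ => 1) + (Z + fun ω => Z ω ^ 2) := by
    filter_upwards [hZ1] with ω hω
    have := le_of_abs_le (Real.abs_exp_sub_one_sub_id_le hω)
    simp only [Pi.add_apply]
    linarith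
  have hsum := hZi.add hZ2i
  filter_upwards [condExp_mono (m := m) hexpi ((integrable_const 1).add hsum) hexp,
    condExp_add (integrable_const 1) hsum m, condExp_add hZi hZ2i m] with ω hmono hadd hadd'
  rw [hadd, Pi.add_apply, condExp_const hm, hadd', Pi.add_apply] at hmono
  linarith [Real.add_one_le_exp ((μ[Z | m]) ω + (μ[fun ω' => Z ω' ^ 2 | m]) ω)]

lemma integral_exp_add_le [IsFiniteMeasure μ] (hm : m ≤ m0) {U V Z : Ω → ℝ}
    (hU : StronglyMeasurable[m] U) (hZ : AEStronglyMeasurable Z μ) (hZ1 : ∀ᵐ ω ∂μ, |Z ω| ≤ 1)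
    (hUi : Integrable (fun ω => Real.exp (U ω)) μ)
    (hUVi : Integrable (fun ω => Real.exp (U ω + V ω)) μ)
    (hV : ∀ᵐ ω ∂μ, (μ[Z | m]) ω + (μ[fun ω' => Z ω' ^ 2 | m]) ω ≤ V ω) :
    ∫ ω, Real.exp (U ω + Z ω) ∂μ ≤ ∫ ω, Real.exp (U ω + V ω) ∂μ := by
  have hZi : Integrable (fun ω => Real.exp (Z ω)) μ := by
    simpa using integrable_exp_add_of_abs_le_one (U := 0) hZ hZ1 (by simp)
  have hUZi := integrable_exp_add_of_abs_le_one hZ hZ1 hUi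
  rw [← integral_condExp hm]
  refine integral_mono_ae integrable_condExp hUVi ?_
  simp only [Real.exp_add] at hUZi ⊢
  have hpull : μ[fun ω => Real.exp (U ω) * Real.exp (Z ω) | m] =ᵐ[μ] _ :=
    condExp_mul_of_stronglyMeasurable_left (Real.continuous_exp.comp_stronglyMeasurable hU) hUZi hZi
  filter_upwards [hpull, condExp_exp_le hm hZ hZ1, hV] with ω hpull hexp hV
  rw [hpull]
  exact mul_le_mul_of_nonneg_left (hexp.trans (Real.exp_le_exp.2 hV)) (Real.exp_pos _).le

lemma neg_div_two_mul_mul_add_sq_mul {A : ℝ} (hA : A ≠ 0) (η : ℝ) :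
    -(η / (2 * A)) * η + (η / (2 * A)) ^ 2 * A = -η ^ 2 / (4 * A) := by
  field_simp
  ring

lemma exists_neg_mul_add_sq_mul_le {s η : ℝ} (hs : 0 < s) (hη : 0 < η) :
    ∃ l ∈ Icc (0 : ℝ) 1, -l * η + l ^ 2 * s ≤ -η ^ 2 / (4 * s + η) := by
  rcases le_total η (2 * s) with h | h
  · refine ⟨η / (2 * s), ⟨by positivity, (div_le_one (by positivity)).2 h⟩, ?_⟩
    rw [neg_div_two_mul_mul_add_sq_mul hs.ne', neg_div, neg_div]
    gcongr
    linarith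
  · refine ⟨1, ⟨zero_le_one, le_rfl⟩, ?_⟩
    rw [le_div_iff₀ (by positivity)]
    nlinarith

/-- The drift-free part of the definition of a self-adjusting process: `Y` is adapted to the
σ-algebras `G t`, has increments bounded by `1`, and the conditional second moment of its increments
is at most `γ (Y t + s)`, where `s = σ / γ` in the usual parametrization; the initial value has
Gaussian-type exponential moments on `[-1, 1]`. The `G t` need not form a filtration. Bounds on the
drift are kept separate, since each tail depends on only one of them. -/
structure IsSelfBounding (μ : Measure Ω) (G : ℕ → MeasurableSpace Ω) (Y : ℕ → Ω → ℝ) (γ s : ℝ) :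
    Prop where
  le : ∀ t, G t ≤ m0
  measurable : ∀ t, Measurable[G t] (Y t)
  abs_sub_le : ∀ t, ∀ᵐ ω ∂μ, |Y (t + 1) ω - Y t ω| ≤ 1
  condExp_sq_le : ∀ t, ∀ᵐ ω ∂μ,
    (μ[fun ω' => (Y (t + 1) ω' - Y t ω') ^ 2 | G t]) ω ≤ γ * (Y t ω + s)
  integrable_exp_zero : ∀ a ∈ Icc (-1 : ℝ) 1, Integrable (fun ω => Real.exp (a * Y 0 ω)) μ
  mgf_zero_le : ∀ a ∈ Icc (-1 : ℝ) 1, mgf (Y 0) μ a ≤ Real.exp (a ^ 2 * s)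

namespace IsSelfBounding

variable {G : ℕ → MeasurableSpace Ω} {Y : ℕ → Ω → ℝ} {γ s a b η : ℝ}

lemma aestronglyMeasurable (h : IsSelfBounding μ G Y γ s) (t : ℕ) :
    AEStronglyMeasurable (Y t) μ :=
  ((h.measurable t).mono (h.le t) le_rfl).aestronglyMeasurable

lemma aestronglyMeasurable_mul_sub (h : IsSelfBounding μ G Y γ s) (a : ℝ) (t : ℕ) :
    AEStronglyMeasurable (fun ω => a * (Y (t + 1) ω - Y t ω)) μ :=
  ((h.aestronglyMeasurable (t + 1)).sub (h.aestronglyMeasurable t)).const_mul a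

lemma abs_mul_sub_le (h : IsSelfBounding μ G Y γ s) (ha : a ∈ Icc (-1) 1) (t : ℕ) :
    ∀ᵐ ω ∂μ, |a * (Y (t + 1) ω - Y t ω)| ≤ 1 := by
  filter_upwards [h.abs_sub_le t] with ω hω
  rw [abs_mul]
  exact mul_le_one₀ (abs_le.2 ha) (abs_nonneg _) hω

lemma integrable_exp_mul (h : IsSelfBounding μ G Y γ s) (ha : a ∈ Icc (-1) 1) (t : ℕ) :
    Integrable (fun ω => Real.exp (a * Y t ω)) μ := by
  induction t with
  | zero => exact h.integrable_exp_zero a ha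
  | succ t ih =>
    convert integrable_exp_add_of_abs_le_one (h.aestronglyMeasurable_mul_sub a t)
      (h.abs_mul_sub_le ha t) ih using 3
    ring

lemma condExp_mul_sub_add_sq_le (h : IsSelfBounding μ G Y γ s) (t : ℕ)
    (hdrift : ∀ᵐ ω ∂μ,
      a * (μ[fun ω' => Y (t + 1) ω' - Y t ω' | G t]) ω ≤ γ * (|a| * b - a * Y t ω)) :
    ∀ᵐ ω ∂μ, (μ[fun ω' => a * (Y (t + 1) ω' - Y t ω') | G t]) ω +
        (μ[fun ω' => (a * (Y (t + 1) ω' - Y t ω')) ^ 2 | G t]) ω ≤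
      γ * (|a| * b + a ^ 2 * s) - γ * a * (1 - a) * Y t ω := by
  simp only [mul_pow]
  have hlin : μ[fun ω => a * (Y (t + 1) ω - Y t ω) | G t] =ᵐ[μ] _ := condExp_smul a _ _
  have hsq : μ[fun ω => a ^ 2 * (Y (t + 1) ω - Y t ω) ^ 2 | G t] =ᵐ[μ] _ :=
    condExp_smul (a ^ 2) _ _
  filter_upwards [hlin, hsq, hdrift, h.condExp_sq_le t] with ω hlin hsq hdrift hvar
  rw [hlin, hsq]
  simp only [Pi.smul_apply, smul_eq_mul]
  linarith [mul_le_mul_of_nonneg_left hvar (sq_nonneg a)]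

lemma mgf_succ_le [IsFiniteMeasure μ] (h : IsSelfBounding μ G Y γ s) (ha : a ∈ Icc (-1) 1)
    (ha' : a * (1 - γ * (1 - a)) ∈ Icc (-1) 1) (t : ℕ)
    (hdrift : ∀ᵐ ω ∂μ,
      a * (μ[fun ω' => Y (t + 1) ω' - Y t ω' | G t]) ω ≤ γ * (|a| * b - a * Y t ω)) :
    mgf (Y (t + 1)) μ a ≤
      Real.exp (γ * (|a| * b + a ^ 2 * s)) * mgf (Y t) μ (a * (1 - γ * (1 - a))) := by
  have hsplit (ω : Ω) : Real.exp (a * Y t ω + (γ * (|a| * b + a ^ 2 * s) -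
      γ * a * (1 - a) * Y t ω)) =
      Real.exp (γ * (|a| * b + a ^ 2 * s)) * Real.exp (a * (1 - γ * (1 - a)) * Y t ω) := by
    rw [← Real.exp_add]
    ring_nf
  calc mgf (Y (t + 1)) μ a
      = ∫ ω, Real.exp (a * Y t ω + a * (Y (t + 1) ω - Y t ω)) ∂μ := by
        simp only [mgf, ← mul_add, add_sub_cancel]
    _ ≤ ∫ ω, Real.exp (a * Y t ω + (γ * (|a| * b + a ^ 2 * s) - γ * a * (1 - a) * Y t ω)) ∂μ := by
        refine integral_exp_add_le (h.le t) ((h.measurable t).const_mul a).stronglyMeasurable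
          (h.aestronglyMeasurable_mul_sub a t) (h.abs_mul_sub_le ha t) (h.integrable_exp_mul ha t)
          ?_ (h.condExp_mul_sub_add_sq_le t hdrift)
        simpa only [hsplit] using (h.integrable_exp_mul ha' t).const_mul _
    _ = _ := by simp only [hsplit, integral_const_mul, mgf]

lemma mgf_le_exp_of_supersolution [IsFiniteMeasure μ] (h : IsSelfBounding μ G Y γ s)
    {D : Set ℝ} (hD : D ⊆ Icc (-1) 1) {φ : ℝ → ℝ}
    (hmaps : ∀ a ∈ D, a * (1 - γ * (1 - a)) ∈ D)
    (hdrift : ∀ t, ∀ a ∈ D, ∀ᵐ ω ∂μ,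
      a * (μ[fun ω' => Y (t + 1) ω' - Y t ω' | G t]) ω ≤ γ * (|a| * b - a * Y t ω))
    (hinit : ∀ a ∈ D, a ^ 2 * s ≤ φ a)
    (hφ : ∀ a ∈ D, γ * (|a| * b + a ^ 2 * s) + φ (a * (1 - γ * (1 - a))) ≤ φ a)
    (t : ℕ) (ha : a ∈ D) : mgf (Y t) μ a ≤ Real.exp (φ a) := by
  induction t generalizing a with
  | zero => exact (h.mgf_zero_le a (hD ha)).trans (Real.exp_le_exp.2 (hinit a ha))
  | succ t ih =>
    have ha' := hmaps a ha
    calc mgf (Y (t + 1)) μ a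
        ≤ Real.exp (γ * (|a| * b + a ^ 2 * s)) * mgf (Y t) μ (a * (1 - γ * (1 - a))) :=
          h.mgf_succ_le (hD ha) (hD ha') t (hdrift t a ha)
      _ ≤ Real.exp (γ * (|a| * b + a ^ 2 * s)) * Real.exp (φ (a * (1 - γ * (1 - a)))) := by
          gcongr
          exact ih ha'
      _ ≤ Real.exp (φ a) := by
          rw [← Real.exp_add]
          exact Real.exp_le_exp.2 (hφ a ha)

lemma mgf_le_of_mem_Icc_zero [IsFiniteMeasure μ] (h : IsSelfBounding μ G Y γ s) (hγ0 : 0 ≤ γ)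
    (hγ1 : γ ≤ 1) (hs : 0 ≤ s) (hb : 0 ≤ b)
    (hdrift : ∀ t, ∀ᵐ ω ∂μ, (μ[fun ω' => Y (t + 1) ω' - Y t ω' | G t]) ω ≤ γ * (b - Y t ω))
    {l A : ℝ} (hl : l < 1) (hA : s + b ≤ A * (1 - l)) (ha : a ∈ Icc 0 l) (t : ℕ) :
    mgf (Y t) μ a ≤ Real.exp (|a| * b + a ^ 2 * A) := by
  have hl' : 0 < 1 - l := sub_pos.2 hl
  have hA0 : 0 ≤ A := nonneg_of_mul_nonneg_left ((add_nonneg hs hb).trans hA) hl'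
  have hfactor {a : ℝ} (ha : a ∈ Icc 0 l) :
      0 ≤ 1 - γ * (1 - a) ∧ 1 - γ * (1 - a) ≤ 1 - γ * (1 - l) ∧ 1 - γ * (1 - a) ≤ 1 := by
    have ha1 : 0 ≤ 1 - a := by linarith [ha.2]
    refine ⟨sub_nonneg.2 (mul_le_one₀ hγ1 ha1 (by linarith [ha.1])), ?_,
      sub_le_self _ (mul_nonneg hγ0 ha1)⟩
    gcongr
    exact ha.2
  refine h.mgf_le_exp_of_supersolution (b := b) (D := Icc 0 l) (φ := fun a => |a| * b + a ^ 2 * A)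
    (fun a ha => ⟨by linarith [ha.1], ha.2.trans hl.le⟩) ?maps ?drift ?init ?super t ha
  case maps =>
    intro a ha
    obtain ⟨h0, -, h1⟩ := hfactor ha
    exact ⟨mul_nonneg ha.1 h0, (mul_le_of_le_one_right ha.1 h1).trans ha.2⟩
  case drift =>
    intro t a ha
    filter_upwards [hdrift t] with ω hω
    rw [abs_of_nonneg ha.1]
    linarith [mul_le_mul_of_nonneg_left hω ha.1]
  case init =>
    intro a ha
    have hsA : s ≤ A := by linarith [mul_nonneg hA0 (ha.1.trans ha.2)]
    have hab : 0 ≤ |a| * b := by positivity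
    linarith [mul_le_mul_of_nonneg_left hsA (sq_nonneg a)]
  case super =>
    intro a ha
    obtain ⟨h0, hle, h1⟩ := hfactor ha
    have hA_step : γ * (s + b) + (1 - γ * (1 - a)) ^ 2 * A ≤ A := by
      calc γ * (s + b) + (1 - γ * (1 - a)) ^ 2 * A
          ≤ γ * (A * (1 - l)) + (1 - γ * (1 - l)) * A := by
            gcongr
            exact (pow_le_of_le_one h0 h1 two_ne_zero).trans hle
        _ = A := by ring
    simp only [abs_of_nonneg ha.1, abs_of_nonneg (mul_nonneg ha.1 h0)]
    linarith [mul_le_mul_of_nonneg_left hA_step (sq_nonneg a)]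

lemma mgf_le_of_mem_Icc_neg_one_zero [IsFiniteMeasure μ] (h : IsSelfBounding μ G Y γ s)
    (hγ0 : 0 ≤ γ) (hγ : γ ≤ 1 / 2) (hs : 0 ≤ s) (hb : 0 ≤ b)
    (hdrift : ∀ t, ∀ᵐ ω ∂μ, γ * (-b - Y t ω) ≤ (μ[fun ω' => Y (t + 1) ω' - Y t ω' | G t]) ω)
    (ha : a ∈ Icc (-1) 0) (t : ℕ) : mgf (Y t) μ a ≤ Real.exp (|a| * b + a ^ 2 * s) := by
  have hfactor {a : ℝ} (ha : a ∈ Icc (-1) 0) :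
      0 ≤ 1 - γ * (1 - a) ∧ 1 - γ * (1 - a) ≤ 1 - γ := by
    constructor <;> nlinarith [ha.1, ha.2]
  refine h.mgf_le_exp_of_supersolution (b := b) (D := Icc (-1) 0)
    (φ := fun a => |a| * b + a ^ 2 * s) (fun a ha => ⟨ha.1, by linarith [ha.2]⟩)
    ?maps ?drift ?init ?super t ha
  case maps =>
    intro a ha
    obtain ⟨h0, h1⟩ := hfactor ha
    exact ⟨ha.1.trans (le_mul_of_le_one_right ha.2 (by linarith)),
      mul_nonpos_of_nonpos_of_nonneg ha.2 h0⟩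
  case drift =>
    intro t a ha
    filter_upwards [hdrift t] with ω hω
    rw [abs_of_nonpos ha.2]
    linarith [mul_le_mul_of_nonpos_left hω ha.2]
  case init =>
    intro a _
    exact le_add_of_nonneg_left (by positivity)
  case super =>
    intro a ha
    obtain ⟨h0, h1⟩ := hfactor ha
    have hs_step : γ * s + (1 - γ * (1 - a)) ^ 2 * s ≤ s := by
      calc γ * s + (1 - γ * (1 - a)) ^ 2 * s ≤ γ * s + (1 - γ) * s := by
            gcongr
            exact (pow_le_of_le_one h0 (by linarith) two_ne_zero).trans h1
        _ = s := by ring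
    simp only [abs_of_nonpos ha.2, abs_of_nonpos (mul_nonpos_of_nonpos_of_nonneg ha.2 h0)]
    have hab : 0 ≤ γ * a ^ 2 * b := by positivity
    linarith [mul_le_mul_of_nonneg_left hs_step (sq_nonneg a)]

theorem measureReal_add_le_le [IsFiniteMeasure μ] (h : IsSelfBounding μ G Y γ s) (hγ0 : 0 ≤ γ)
    (hγ1 : γ ≤ 1) (hs : 0 < s) (hb : 0 ≤ b)
    (hdrift : ∀ t, ∀ᵐ ω ∂μ, (μ[fun ω' => Y (t + 1) ω' - Y t ω' | G t]) ω ≤ γ * (b - Y t ω))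
    (hη : 0 < η) (t : ℕ) :
    μ.real {ω | b + η ≤ Y t ω} ≤ Real.exp (-η ^ 2 / (4 * (s + b) + 2 * η)) := by
  obtain ⟨A, hA⟩ : ∃ A, A = s + b + η / 2 := ⟨_, rfl⟩
  have hA0 : 0 < A := hA ▸ by positivity
  have hl0 : 0 ≤ η / (2 * A) := by positivity
  have hl1 : η / (2 * A) < 1 := (div_lt_one (by positivity)).2 (by linarith)
  have hAl : s + b = A * (1 - η / (2 * A)) := by
    field_simp
    linarith
  calc μ.real {ω | b + η ≤ Y t ω}
      ≤ Real.exp (-(η / (2 * A)) * (b + η)) * mgf (Y t) μ (η / (2 * A)) :=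
        measure_ge_le_exp_mul_mgf _ hl0 (h.integrable_exp_mul ⟨by linarith, hl1.le⟩ t)
    _ ≤ Real.exp (-(η / (2 * A)) * (b + η)) *
          Real.exp (|η / (2 * A)| * b + (η / (2 * A)) ^ 2 * A) := by
        gcongr
        exact h.mgf_le_of_mem_Icc_zero hγ0 hγ1 hs.le hb hdrift hl1 hAl.le ⟨hl0, le_rfl⟩ t
    _ = Real.exp (-(η / (2 * A)) * η + (η / (2 * A)) ^ 2 * A) := by
        rw [← Real.exp_add, abs_of_nonneg hl0]
        ring_nf
    _ = Real.exp (-η ^ 2 / (4 * (s + b) + 2 * η)) := by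
        rw [neg_div_two_mul_mul_add_sq_mul hA0.ne', hA]
        ring_nf

theorem measureReal_le_neg_sub_le [IsFiniteMeasure μ] (h : IsSelfBounding μ G Y γ s) (hγ0 : 0 ≤ γ)
    (hγ : γ ≤ 1 / 2) (hs : 0 < s) (hb : 0 ≤ b)
    (hdrift : ∀ t, ∀ᵐ ω ∂μ, γ * (-b - Y t ω) ≤ (μ[fun ω' => Y (t + 1) ω' - Y t ω' | G t]) ω)
    (hη : 0 < η) (t : ℕ) :
    μ.real {ω | Y t ω ≤ -b - η} ≤ Real.exp (-η ^ 2 / (4 * s + η)) := by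
  obtain ⟨l, ⟨hl0, hl1⟩, hl⟩ := exists_neg_mul_add_sq_mul_le hs hη
  have hneg : -l ∈ Icc (-1) 0 := ⟨neg_le_neg hl1, neg_nonpos.2 hl0⟩
  calc μ.real {ω | Y t ω ≤ -b - η}
      ≤ Real.exp (-(-l) * (-b - η)) * mgf (Y t) μ (-l) :=
        measure_le_le_exp_mul_mgf _ hneg.2 (h.integrable_exp_mul ⟨hneg.1, by linarith⟩ t)
    _ ≤ Real.exp (-(-l) * (-b - η)) * Real.exp (|(-l)| * b + (-l) ^ 2 * s) := by
        gcongr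
        exact h.mgf_le_of_mem_Icc_neg_one_zero hγ0 hγ hs.le hb hdrift hneg t
    _ = Real.exp (-l * η + l ^ 2 * s) := by
        rw [← Real.exp_add, abs_neg, abs_of_nonneg hl0]
        ring_nf
    _ ≤ Real.exp (-η ^ 2 / (4 * s + η)) := Real.exp_le_exp.2 hl

end IsSelfBounding

theorem self_adjusting_concentration_general [IsFiniteMeasure μ] {G : ℕ → MeasurableSpace Ω}
    {Y : ℕ → Ω → ℝ} {γ βu βl σ : ℝ} (hG : ∀ t, G t ≤ m0) (hY : ∀ t, Measurable[G t] (Y t))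
    (hγ0 : 0 < γ) (hγ : γ ≤ 1 / 2) (hβu : 0 ≤ βu) (hβl : 0 ≤ βl) (hσ : 0 < σ)
    (hbdd : ∀ t, ∀ᵐ ω ∂μ, |Y (t + 1) ω - Y t ω| ≤ 1)
    (hdrift : ∀ t, ∀ᵐ ω ∂μ,
      -γ * Y t ω - βl ≤ (μ[fun ω' => Y (t + 1) ω' - Y t ω' | G t]) ω ∧
      (μ[fun ω' => Y (t + 1) ω' - Y t ω' | G t]) ω ≤ -γ * Y t ω + βu)
    (hvar : ∀ t, ∀ᵐ ω ∂μ,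
      (μ[fun ω' => (Y (t + 1) ω' - Y t ω') ^ 2 | G t]) ω ≤ γ * Y t ω + σ)
    (hinit : ∀ a : ℝ, -1 ≤ a → a ≤ 1 →
      Integrable (fun ω => Real.exp (a * Y 0 ω)) μ ∧
      ∫ ω, Real.exp (a * Y 0 ω) ∂μ ≤ Real.exp (a ^ 2 * σ / γ))
    {η : ℝ} (hη : 0 < η) (t : ℕ) :
    μ {ω | βu / γ + η ≤ Y t ω} ≤
        ENNReal.ofReal (Real.exp (-η ^ 2 / (4 * (σ + βu) / γ + 2 * η))) ∧
      μ {ω | Y t ω ≤ -(βl / γ) - η} ≤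
        ENNReal.ofReal (Real.exp (-η ^ 2 / (4 * σ / γ + η))) := by
  have hs : 0 < σ / γ := by positivity
  have h : IsSelfBounding μ G Y γ (σ / γ) :=
    { le := hG
      measurable := hY
      abs_sub_le := hbdd
      condExp_sq_le := by simpa only [mul_add, mul_div_cancel₀ _ hγ0.ne'] using hvar
      integrable_exp_zero := fun a ha => (hinit a ha.1 ha.2).1
      mgf_zero_le := fun a ha => by simpa only [mgf, mul_div_assoc] using (hinit a ha.1 ha.2).2 }
  rw [← ofReal_measureReal, ← ofReal_measureReal]
  simp only [mul_div_assoc, add_div]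
  refine ⟨ENNReal.ofReal_le_ofReal <| h.measureReal_add_le_le hγ0.le (by linarith) hs
    (by positivity) (fun t => ?_) hη t, ENNReal.ofReal_le_ofReal <|
    h.measureReal_le_neg_sub_le hγ0.le hγ hs (by positivity) (fun t => ?_) hη t⟩
  all_goals
    filter_upwards [hdrift t] with ω hω
    simp only [mul_sub, mul_neg, mul_div_cancel₀ _ hγ0.ne']
    linarith [hω.1, hω.2]

end

/-- **Concentration inequality for self-adjusting processes (Theorem 2.8).**
Let `(Y_t)` be real random variables with difference sequence `X_t := Y_t - Y_{t-1}` and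
`G_{t-1} := σ(Y_0, …, Y_{t-1})`. Suppose for some `γ ∈ (0, 1/2]`, `β_u, β_l ≥ 0`, `σ > 0`
that a.s. for all `t ≥ 1`: `|X_t| ≤ 1`;
`-γ Y_{t-1} - β_l ≤ E[X_t | G_{t-1}] ≤ -γ Y_{t-1} + β_u`;
`E[X_t² | G_{t-1}] ≤ γ Y_{t-1} + σ`; and `E[exp(a Y_0)] ≤ exp(a² σ/γ)` for `a ∈ [-1, 1]`.
Then for every `η > 0` and `t ≥ 0`,
`P[Y_t ≥ β_u/γ + η] ≤ exp(-η² / (4(σ+β_u)/γ + 2η))` and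
`P[Y_t ≤ -β_l/γ - η] ≤ exp(-η² / (4σ/γ + η))`. -/
theorem self_adjusting_concentration {Ω : Type*} [MeasurableSpace Ω]
    (μ : Measure Ω) [IsProbabilityMeasure μ]
    (Y : ℕ → Ω → ℝ) (hYmeas : ∀ t, Measurable (Y t))
    (γ βu βl σ : ℝ) (hγ0 : 0 < γ) (hγ : γ ≤ 1/2) (hβu : 0 ≤ βu) (hβl : 0 ≤ βl) (hσ : 0 < σ)
    (G : ℕ → MeasurableSpace Ω)
    (hG : ∀ t, G t = ⨆ s ∈ Finset.range (t + 1),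
      MeasurableSpace.comap (Y s) (inferInstance : MeasurableSpace ℝ))
    (hbdd : ∀ t : ℕ, 1 ≤ t → ∀ᵐ ω ∂μ, |Y t ω - Y (t - 1) ω| ≤ 1)
    (hdrift : ∀ t : ℕ, 1 ≤ t → ∀ᵐ ω ∂μ,
      -γ * Y (t - 1) ω - βl ≤ (μ[fun ω' => Y t ω' - Y (t - 1) ω' | G (t - 1)]) ω ∧
      (μ[fun ω' => Y t ω' - Y (t - 1) ω' | G (t - 1)]) ω ≤ -γ * Y (t - 1) ω + βu)
    (hvar : ∀ t : ℕ, 1 ≤ t → ∀ᵐ ω ∂μ,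
      (μ[fun ω' => (Y t ω' - Y (t - 1) ω') ^ 2 | G (t - 1)]) ω ≤ γ * Y (t - 1) ω + σ)
    (hinit : ∀ a : ℝ, -1 ≤ a → a ≤ 1 →
      Integrable (fun ω => Real.exp (a * Y 0 ω)) μ ∧
      ∫ ω, Real.exp (a * Y 0 ω) ∂μ ≤ Real.exp (a^2 * σ / γ)) :
    ∀ η : ℝ, 0 < η → ∀ t : ℕ,
      μ {ω | βu / γ + η ≤ Y t ω} ≤
        ENNReal.ofReal (Real.exp (-η^2 / (4 * (σ + βu) / γ + 2 * η))) ∧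
      μ {ω | Y t ω ≤ -(βl / γ) - η} ≤
        ENNReal.ofReal (Real.exp (-η^2 / (4 * σ / γ + η))) :=
  fun _ => self_adjusting_concentration_general
    (fun t => hG t ▸ iSup₂_le fun s _ => (hYmeas s).comap_le)
    (fun t => measurable_iff_comap_le.2 (hG t ▸ le_iSup₂_of_le t (by simp) le_rfl))
    hγ0 hγ hβu hβl hσ (fun t => hbdd (t + 1) t.succ_pos) (fun t => hdrift (t + 1) t.succ_pos)
    (fun t => hvar (t + 1) t.succ_pos) hinit
end

section
/- There exists n₀ ∈ ℕ such that the following holds for all n ≥ n₀. Let v_1, …, v_m ∈ ℝ^n and x ∈ [0,1]^m satisfy Σ_{i=1}^m x_i v_i v_iᵀ = I_n, let c ∈ ℝ_+^m, set C := ⟨c, x⟩, and let ε ∈ (0, 1/2]. If C ≥ 15·n·c_∞/ε², then there exists z ∈ {0,1}^m such that ⟨c, z⟩ ≤ C and Σ_{i=1}^m z_i v_i v_iᵀ ⪰ (1 − 4ε)·I_n. (Existential form of one-sided spectral rounding under a cost budget, used for weighted experimental design.) -/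
open Matrix BigOperators

/-!
Put `K = c_∞`, `ℓ = 1 - 4ε` and `M_S = ∑_{i ∈ S} vᵢ vᵢᵀ - ℓ I`. Among the sets `S` with `M_S ≻ 0`
(the full set is one), choose one minimizing the barrier potential `2 K tr(M_S⁻¹) + c(S)`, and let
`Q = M_S⁻¹`, `aᵢ = vᵢᵀ Q vᵢ`, `bᵢ = vᵢᵀ Q² vᵢ`. By the Sherman–Morrison formula, minimality under
deletions gives `cᵢ (1 - aᵢ) ≤ 2 K bᵢ` for `i ∈ S`, and minimality under insertions gives
`2 K bᵢ ≤ cᵢ (1 + aᵢ)` for `i ∉ S`. Put `s = 1 - 2ε`, weight these by `1 - s xᵢ` and `s xᵢ`, and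
sum, using `cᵢ ≤ K`:
`c(S) - s C ≤ 2 K tr(Q² (M_S + (ℓ - s) I)) + K tr(Q (M_S + (ℓ + s) I))`.
The right side is `K (n + (4 - 6ε) tr Q - 4ε tr Q²) ≤ K n / ε`, by `tr (Q - r I)² ≥ 0` with
`r = (2 - 3ε) / (4ε)`, and the budget makes this at most `2ε C = (1 - s) C`, so that `c(S) ≤ C`.
For `ε > 1/2`, where `s < 0`, the empty set does.
-/

section RankOne

lemma trace_mul_sum_smul_vecMulVec {ι κ R : Type*} [Fintype κ] [CommSemiring R] (P : Matrix κ κ R)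
    (s : Finset ι) (x : ι → R) (u w : ι → κ → R) :
    (P * ∑ i ∈ s, x i • vecMulVec (u i) (w i)).trace = ∑ i ∈ s, x i * (w i ⬝ᵥ P *ᵥ u i) := by
  simp only [Finset.mul_sum, trace_sum, mul_smul_comm, trace_smul, mul_vecMulVec, trace_vecMulVec,
    smul_eq_mul, dotProduct_comm]

variable {κ 𝕜 : Type*} [Fintype κ] [DecidableEq κ] [Field 𝕜]

lemma inv_add_vecMulVec {A : Matrix κ κ 𝕜} (hA : IsUnit A) (u w : κ → 𝕜)
    (h : 1 + w ⬝ᵥ A⁻¹ *ᵥ u ≠ 0) :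
    (A + vecMulVec u w)⁻¹ =
      A⁻¹ - (1 + w ⬝ᵥ A⁻¹ *ᵥ u)⁻¹ • vecMulVec (A⁻¹ *ᵥ u) (w ᵥ* A⁻¹) := by
  have hAA : A * A⁻¹ = 1 := mul_nonsing_inv _ ((isUnit_iff_isUnit_det _).1 hA)
  apply inv_eq_right_inv
  rw [add_mul, mul_sub, mul_sub, hAA, mul_smul_comm, mul_smul_comm, mul_vecMulVec, mulVec_mulVec,
    hAA, one_mulVec, vecMulVec_mul, vecMulVec_mul_vecMulVec, vecMulVec_smul]
  match_scalars
  · rfl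
  · field_simp
    ring

lemma trace_inv_add_vecMulVec {A : Matrix κ κ 𝕜} (hA : IsUnit A) (u w : κ → 𝕜)
    (h : 1 + w ⬝ᵥ A⁻¹ *ᵥ u ≠ 0) :
    (A + vecMulVec u w)⁻¹.trace =
      A⁻¹.trace - (w ⬝ᵥ (A⁻¹ ^ 2) *ᵥ u) / (1 + w ⬝ᵥ A⁻¹ *ᵥ u) := by
  rw [inv_add_vecMulVec hA u w h, trace_sub, trace_smul, trace_vecMulVec,
    dotProduct_comm (A⁻¹ *ᵥ u), ← dotProduct_mulVec, mulVec_mulVec, ← sq, smul_eq_mul,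
    inv_mul_eq_div]

lemma trace_inv_sub_vecMulVec {A : Matrix κ κ 𝕜} (hA : IsUnit A) (u w : κ → 𝕜)
    (h : 1 - w ⬝ᵥ A⁻¹ *ᵥ u ≠ 0) :
    (A - vecMulVec u w)⁻¹.trace =
      A⁻¹.trace + (w ⬝ᵥ (A⁻¹ ^ 2) *ᵥ u) / (1 - w ⬝ᵥ A⁻¹ *ᵥ u) := by
  have hadd := trace_inv_add_vecMulVec hA (-u) w
  simp only [neg_vecMulVec, mulVec_neg, dotProduct_neg, neg_div, sub_neg_eq_add,
    ← sub_eq_add_neg] at hadd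
  exact hadd h

end RankOne

section RealMatrix

variable {κ : Type*}

lemma posSemidef_vecMulVec_self [Finite κ] (v : κ → ℝ) : (vecMulVec v v).PosSemidef := by
  simpa only [star_trivial] using posSemidef_vecMulVec_self_star v

variable [Fintype κ] [DecidableEq κ] {M : Matrix κ κ ℝ}

lemma sq_dotProduct_le_mul_of_posDef (hM : M.PosDef) (v y : κ → ℝ) :
    (v ⬝ᵥ y) ^ 2 ≤ (v ⬝ᵥ M⁻¹ *ᵥ v) * (y ⬝ᵥ M *ᵥ y) := by
  have hsymm : Mᵀ = M := hM.isHermitian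
  have hMv : M *ᵥ M⁻¹ *ᵥ v = v := by
    rw [mulVec_mulVec, mul_nonsing_inv _ ((isUnit_iff_isUnit_det _).1 hM.isUnit), one_mulVec]
  have hcauchy := (toBilin' M).apply_sq_le_of_symm
    (fun z => by simpa [toBilin'_apply'] using hM.posSemidef.dotProduct_mulVec_nonneg z)
    ⟨fun a b => by
      simp [toBilin'_apply', dotProduct_mulVec a, ← mulVec_transpose, hsymm, dotProduct_comm]⟩
    y (M⁻¹ *ᵥ v)
  simpa only [toBilin'_apply', hMv, dotProduct_comm _ v, mul_comm] using hcauchy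

lemma posDef_sub_vecMulVec_self (hM : M.PosDef) {v : κ → ℝ} (hv : v ⬝ᵥ M⁻¹ *ᵥ v < 1) :
    (M - vecMulVec v v).PosDef := by
  refine .of_dotProduct_mulVec_pos
    (hM.isHermitian.sub (posSemidef_vecMulVec_self v).isHermitian) fun y hy => ?_
  have hpos : 0 < y ⬝ᵥ M *ᵥ y := by simpa using hM.dotProduct_mulVec_pos hy
  have hexpand : y ⬝ᵥ (M - vecMulVec v v) *ᵥ y = y ⬝ᵥ M *ᵥ y - (v ⬝ᵥ y) ^ 2 := by
    simp [sub_mulVec, vecMulVec_mulVec, dotProduct_comm y v, sq]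
  rw [star_trivial, hexpand]
  linarith [sq_dotProduct_le_mul_of_posDef hM v y, mul_lt_mul_of_pos_right hv hpos]

lemma mul_trace_le_mul_trace_sq_add (hM : M.IsSymm) (α : ℝ) {β : ℝ} (hβ : 0 < β) :
    α * M.trace ≤ β * (M ^ 2).trace + Fintype.card κ * α ^ 2 / (4 * β) := by
  set N := M - (α / (2 * β)) • (1 : Matrix κ κ ℝ) with hN
  have hNsymm : Nᴴ = N := by
    rw [hN, conjTranspose_eq_transpose_of_trivial, transpose_sub, hM.eq, transpose_smul,
      transpose_one]
  have hnonneg : 0 ≤ (N ^ 2).trace := by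
    simpa only [hNsymm, ← sq] using (posSemidef_conjTranspose_mul_self N).trace_nonneg
  have hexpand : β * (N ^ 2).trace =
      β * (M ^ 2).trace - α * M.trace + Fintype.card κ * α ^ 2 / (4 * β) := by
    simp only [hN, sq, sub_mul, mul_sub, smul_mul_assoc, mul_smul_comm, one_mul, mul_one,
      trace_sub, trace_smul, trace_one, smul_eq_mul]
    field_simp
    ring
  linarith [mul_nonneg hβ.le hnonneg]

end RealMatrix

lemma sum_sub_sum_mul_le_of_exchange {ι : Type*} [Fintype ι] {S : Finset ι}
    {y a b c : ι → ℝ} {t K : ℝ} (hy : ∀ i, 0 ≤ y i ∧ y i ≤ 1)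
    (hc : ∀ i, 0 ≤ c i) (hcK : ∀ i, c i ≤ K) (ha : ∀ i, 0 ≤ a i)
    (hdel : ∀ i ∈ S, c i * (1 - a i) ≤ t * b i) (hins : ∀ i ∉ S, t * b i ≤ c i * (1 + a i)) :
    ∑ i ∈ S, c i - ∑ i, c i * y i ≤
      t * (∑ i ∈ S, b i - ∑ i, y i * b i) + K * (∑ i ∈ S, a i + ∑ i, y i * a i) := by
  classical
  set χ : ι → ℝ := fun i => if i ∈ S then 1 else 0 with hχ
  have hsum (f : ι → ℝ) : ∑ i ∈ S, f i = ∑ i, χ i * f i := by simp [hχ]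
  have hterm (i : ι) : χ i * c i - c i * y i ≤
      t * (χ i * b i - y i * b i) + K * (χ i * a i + y i * a i) := by
    obtain ⟨hy0, hy1⟩ := hy i
    have hca : c i * a i ≤ K * a i := mul_le_mul_of_nonneg_right (hcK i) (ha i)
    have hyKa : 0 ≤ y i * (K * a i) := mul_nonneg hy0 ((mul_nonneg (hc i) (ha i)).trans hca)
    by_cases hi : i ∈ S
    · simp only [hχ, if_pos hi]
      linarith [mul_le_mul_of_nonneg_left
        (show c i - t * b i ≤ K * a i by linarith [hdel i hi]) (sub_nonneg.2 hy1)]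
    · simp only [hχ, if_neg hi]
      linarith [mul_le_mul_of_nonneg_left
        (show t * b i - c i ≤ K * a i by linarith [hins i hi]) hy0]
  simpa only [hsum, Finset.sum_sub_distrib, Finset.sum_add_distrib, ← Finset.mul_sum]
    using Finset.sum_le_sum fun i (_ : i ∈ Finset.univ) => hterm i

section Barrier

variable {ι κ : Type*} [DecidableEq κ] {v : ι → κ → ℝ} {c : ι → ℝ} {l t : ℝ}
  {S : Finset ι} {i : ι}

/-- The shifted Gram matrix `M_S = ∑_{i ∈ S} vᵢ vᵢᵀ - ℓ I`, whose positivity says that `ℓ` is a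
strict lower bound for the spectrum of the Gram matrix of `S`. -/
def shiftedGram (v : ι → κ → ℝ) (l : ℝ) (S : Finset ι) : Matrix κ κ ℝ :=
  ∑ i ∈ S, vecMulVec (v i) (v i) - l • 1

lemma shiftedGram_insert [DecidableEq ι] (hi : i ∉ S) :
    shiftedGram v l (insert i S) = shiftedGram v l S + vecMulVec (v i) (v i) := by
  rw [shiftedGram, shiftedGram, Finset.sum_insert hi]
  abel

lemma shiftedGram_erase [DecidableEq ι] (hi : i ∈ S) :
    shiftedGram v l (S.erase i) = shiftedGram v l S - vecMulVec (v i) (v i) := by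
  rw [shiftedGram, shiftedGram, ← Finset.add_sum_erase S _ hi]
  abel

lemma shiftedGram_univ_posDef [Fintype ι] [Finite κ] {x : ι → ℝ} (hx : ∀ i, x i ≤ 1)
    (hI : ∑ i, x i • vecMulVec (v i) (v i) = 1) (hl : l < 1) :
    (shiftedGram v l Finset.univ).PosDef := by
  have hdecomp : shiftedGram v l Finset.univ =
      (1 - l) • 1 + ∑ i, (1 - x i) • vecMulVec (v i) (v i) := by
    simp only [shiftedGram, sub_smul, Finset.sum_sub_distrib, one_smul, hI]
    abel
  rw [hdecomp]
  exact (PosDef.one.smul (sub_pos.2 hl)).add_posSemidef <| posSemidef_sum _ fun i _ =>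
    (posSemidef_vecMulVec_self (v i)).smul (sub_nonneg.2 (hx i))

variable [Fintype κ]

/-- The barrier potential `t tr(M_S⁻¹) + c(S)`, which trades the cost of `S` against the distance of
its Gram matrix from the barrier `ℓ I`. Matrix inversion being total, it is meaningful only where
`M_S` is positive definite, and it is minimized over such `S` only. -/
noncomputable def barrierPotential (v : ι → κ → ℝ) (c : ι → ℝ) (l t : ℝ) (S : Finset ι) : ℝ :=
  t * (shiftedGram v l S)⁻¹.trace + ∑ i ∈ S, c i

lemma mul_one_sub_le_of_isMinOn_barrierPotential (hS : (shiftedGram v l S).PosDef)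
    (hmin : IsMinOn (barrierPotential v c l t) {T | (shiftedGram v l T).PosDef} S)
    (ht : 0 ≤ t) (hi : i ∈ S) (hci : 0 ≤ c i) :
    c i * (1 - v i ⬝ᵥ (shiftedGram v l S)⁻¹ *ᵥ v i) ≤
      t * (v i ⬝ᵥ ((shiftedGram v l S)⁻¹ ^ 2) *ᵥ v i) := by
  classical
  obtain ha | ha := lt_or_ge (v i ⬝ᵥ (shiftedGram v l S)⁻¹ *ᵥ v i) 1
  · have hle := isMinOn_iff.1 hmin (S.erase i) <| by
      simpa only [Set.mem_ofPred_eq, shiftedGram_erase hi] using posDef_sub_vecMulVec_self hS ha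
    rw [barrierPotential, barrierPotential, shiftedGram_erase hi,
      trace_inv_sub_vecMulVec hS.isUnit _ _ (sub_pos.2 ha).ne',
      ← Finset.add_sum_erase S c hi] at hle
    rw [← le_div_iff₀ (sub_pos.2 ha), mul_div_assoc]
    linarith
  · have hb : 0 ≤ v i ⬝ᵥ ((shiftedGram v l S)⁻¹ ^ 2) *ᵥ v i := by
      simpa using (hS.inv.posSemidef.pow 2).dotProduct_mulVec_nonneg (v i)
    exact (mul_nonpos_of_nonneg_of_nonpos hci (sub_nonpos.2 ha)).trans (mul_nonneg ht hb)

lemma le_mul_one_add_of_isMinOn_barrierPotential (hS : (shiftedGram v l S).PosDef)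
    (hmin : IsMinOn (barrierPotential v c l t) {T | (shiftedGram v l T).PosDef} S) (hi : i ∉ S) :
    t * (v i ⬝ᵥ ((shiftedGram v l S)⁻¹ ^ 2) *ᵥ v i) ≤
      c i * (1 + v i ⬝ᵥ (shiftedGram v l S)⁻¹ *ᵥ v i) := by
  classical
  have ha : 0 ≤ v i ⬝ᵥ (shiftedGram v l S)⁻¹ *ᵥ v i := by
    simpa using hS.inv.posSemidef.dotProduct_mulVec_nonneg (v i)
  have ha' : 0 < 1 + v i ⬝ᵥ (shiftedGram v l S)⁻¹ *ᵥ v i := by positivity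
  have hle := isMinOn_iff.1 hmin (insert i S) <| by
    simpa only [Set.mem_ofPred_eq, shiftedGram_insert hi] using
      hS.add_posSemidef (posSemidef_vecMulVec_self (v i))
  rw [barrierPotential, barrierPotential, shiftedGram_insert hi,
    trace_inv_add_vecMulVec hS.isUnit _ _ ha'.ne', Finset.sum_insert hi] at hle
  rw [← div_le_iff₀ ha', mul_div_assoc]
  linarith

lemma sum_dotProduct_mulVec_eq_trace_shiftedGram (P : Matrix κ κ ℝ) :
    ∑ i ∈ S, v i ⬝ᵥ P *ᵥ v i = (P * shiftedGram v l S).trace + l * P.trace := by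
  have hsum := trace_mul_sum_smul_vecMulVec P S (fun _ => 1) v v
  simp only [one_smul, one_mul] at hsum
  rw [← hsum, shiftedGram, mul_sub, trace_sub, mul_smul_comm, mul_one, trace_smul, smul_eq_mul,
    sub_add_cancel]

variable [Fintype ι]

lemma exists_isMinOn_barrierPotential (c : ι → ℝ) (t : ℝ)
    (h : (shiftedGram v l Finset.univ).PosDef) :
    ∃ S, (shiftedGram v l S).PosDef ∧
      IsMinOn (barrierPotential v c l t) {T | (shiftedGram v l T).PosDef} S := by
  obtain ⟨S, hS, hmin⟩ := Set.exists_min_image {T | (shiftedGram v l T).PosDef}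
    (barrierPotential v c l t) (Set.toFinite _) ⟨Finset.univ, h⟩
  exact ⟨S, hS, isMinOn_iff.2 hmin⟩

lemma sum_sub_mul_le_of_isMinOn_barrierPotential {x : ι → ℝ} {s K : ℝ}
    (hx : ∀ i, 0 ≤ x i ∧ x i ≤ 1) (hI : ∑ i, x i • vecMulVec (v i) (v i) = 1)
    (hc : ∀ i, 0 ≤ c i) (hcK : ∀ i, c i ≤ K) (ht : 0 ≤ t) (hs₀ : 0 ≤ s) (hs₁ : s ≤ 1)
    (hS : (shiftedGram v l S).PosDef)
    (hmin : IsMinOn (barrierPotential v c l t) {T | (shiftedGram v l T).PosDef} S) :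
    ∑ i ∈ S, c i - s * ∑ i, c i * x i ≤
      t * ((shiftedGram v l S)⁻¹.trace + (l - s) * ((shiftedGram v l S)⁻¹ ^ 2).trace) +
        K * (Fintype.card κ + (l + s) * (shiftedGram v l S)⁻¹.trace) := by
  set Q := (shiftedGram v l S)⁻¹ with hQ
  have hQM : Q * shiftedGram v l S = 1 :=
    nonsing_inv_mul _ ((isUnit_iff_isUnit_det _).1 hS.isUnit)
  have hfrac (P : Matrix κ κ ℝ) : ∑ i, s * x i * (v i ⬝ᵥ P *ᵥ v i) = s * P.trace := by
    simp only [mul_assoc, ← Finset.mul_sum, ← trace_mul_sum_smul_vecMulVec, hI, mul_one]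
  have hcost : ∑ i, c i * (s * x i) = s * ∑ i, c i * x i := by
    simp only [Finset.mul_sum, mul_left_comm]
  have hexchange := sum_sub_sum_mul_le_of_exchange (y := fun i => s * x i)
    (fun i => ⟨mul_nonneg hs₀ (hx i).1, mul_le_one₀ hs₁ (hx i).1 (hx i).2⟩) hc hcK
    (fun i => by simpa using hS.inv.posSemidef.dotProduct_mulVec_nonneg (v i))
    (fun i hi => mul_one_sub_le_of_isMinOn_barrierPotential hS hmin ht hi (hc i))
    (fun i hi => le_mul_one_add_of_isMinOn_barrierPotential hS hmin hi)
  simp only [hfrac, hcost, sum_dotProduct_mulVec_eq_trace_shiftedGram (l := l), ← hQ, sq Q,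
    mul_assoc Q, hQM, mul_one, trace_one] at hexchange
  rw [sq]
  linarith

theorem exists_finset_sum_le_and_shiftedGram_posDef {x : ι → ℝ} {ε K : ℝ}
    (hx : ∀ i, 0 ≤ x i ∧ x i ≤ 1) (hI : ∑ i, x i • vecMulVec (v i) (v i) = 1)
    (hc : ∀ i, 0 ≤ c i) (hcK : ∀ i, c i ≤ K) (hK : 0 ≤ K) (hε₀ : 0 < ε) (hε : ε ≤ 1 / 2)
    (hC : Fintype.card κ * K / (2 * ε ^ 2) ≤ ∑ i, c i * x i) :
    ∃ S : Finset ι, ∑ i ∈ S, c i ≤ ∑ i, c i * x i ∧ (shiftedGram v (1 - 4 * ε) S).PosDef := by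
  obtain ⟨S, hS, hmin⟩ := exists_isMinOn_barrierPotential c (2 * K)
    (shiftedGram_univ_posDef (fun i => (hx i).2) hI (show 1 - 4 * ε < 1 by linarith))
  refine ⟨S, ?_, hS⟩
  have hcompare := sum_sub_mul_le_of_isMinOn_barrierPotential hx hI hc hcK
    (mul_nonneg zero_le_two hK) (show 0 ≤ 1 - 2 * ε by linarith) (by linarith) hS hmin
  set Q := (shiftedGram v (1 - 4 * ε) S)⁻¹
  have htrace := mul_trace_le_mul_trace_sq_add (M := Q) hS.inv.isHermitian (4 - 6 * ε)
    (show 0 < 4 * ε by linarith)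
  have hcoeff : Fintype.card κ * (4 - 6 * ε) ^ 2 / (4 * (4 * ε)) ≤
      (Fintype.card κ / ε - Fintype.card κ : ℝ) := by
    have hquad : (4 - 6 * ε) ^ 2 ≤ 16 * (1 - ε) := by nlinarith
    calc Fintype.card κ * (4 - 6 * ε) ^ 2 / (4 * (4 * ε))
        ≤ Fintype.card κ * (16 * (1 - ε)) / (4 * (4 * ε)) := by gcongr
      _ = Fintype.card κ / ε - Fintype.card κ := by field_simp; ring
  have hbudget : K * (Fintype.card κ / ε) ≤ 2 * ε * ∑ i, c i * x i :=
    calc K * (Fintype.card κ / ε) = 2 * ε * (Fintype.card κ * K / (2 * ε ^ 2)) := by field_simp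
      _ ≤ 2 * ε * ∑ i, c i * x i := by gcongr
  have hexcess : ∑ i ∈ S, c i - (1 - 2 * ε) * ∑ i, c i * x i ≤ 2 * ε * ∑ i, c i * x i :=
    calc ∑ i ∈ S, c i - (1 - 2 * ε) * ∑ i, c i * x i
        ≤ K * (Fintype.card κ + (4 - 6 * ε) * Q.trace - 4 * ε * (Q ^ 2).trace) := by
          linarith [hcompare]
      _ ≤ K * (Fintype.card κ / ε) := by
          gcongr
          linarith [htrace, hcoeff]
      _ ≤ 2 * ε * ∑ i, c i * x i := hbudget
  linarith

end Barrier

theorem one_sided_spectral_rounding_budget_general {ι κ : Type*} [Fintype ι] [Fintype κ]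
    [DecidableEq κ] {v : ι → κ → ℝ} {x c : ι → ℝ} {ε : ℝ} (hx : ∀ i, 0 ≤ x i ∧ x i ≤ 1)
    (hI : ∑ i, x i • vecMulVec (v i) (v i) = 1) (hc : ∀ i, 0 ≤ c i) (hε : 0 < ε)
    (hC : Fintype.card κ * (⨆ i, c i) / (2 * ε ^ 2) ≤ ∑ i, c i * x i) :
    ∃ z : ι → ℝ, (∀ i, z i = 0 ∨ z i = 1) ∧ ∑ i, c i * z i ≤ ∑ i, c i * x i ∧
      (∑ i, z i • vecMulVec (v i) (v i) - (1 - 4 * ε) • (1 : Matrix κ κ ℝ)).PosSemidef := by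
  classical
  suffices ∃ S : Finset ι, ∑ i ∈ S, c i ≤ ∑ i, c i * x i ∧
      (shiftedGram v (1 - 4 * ε) S).PosSemidef by
    obtain ⟨S, hcost, hS⟩ := this
    exact ⟨fun i => if i ∈ S then 1 else 0, fun i => (ite_eq_or_eq _ _ _).symm,
      by simpa using hcost, by simpa [shiftedGram, ite_smul] using hS⟩
  obtain hsmall | hlarge := le_total ε (1 / 2)
  · obtain ⟨S, hcost, hS⟩ := exists_finset_sum_le_and_shiftedGram_posDef hx hI hc
      (le_ciSup (Set.finite_range c).bddAbove) (Real.iSup_nonneg hc) hε hsmall hC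
    exact ⟨S, hcost, hS.posSemidef⟩
  · have hempty : shiftedGram v (1 - 4 * ε) ∅ = (4 * ε - 1) • 1 := by
      rw [shiftedGram, Finset.sum_empty, zero_sub, ← neg_smul, neg_sub]
    refine ⟨∅, Finset.sum_nonneg fun i _ => mul_nonneg (hc i) (hx i).1, ?_⟩
    rw [hempty]
    exact PosSemidef.one.smul (by linarith)

/-- **One-sided spectral rounding under a cost budget (existential form).**
There exists `n₀` such that for all `n ≥ n₀`: given `v₁, …, v_m ∈ ℝⁿ` and `x ∈ [0,1]^m`
with `∑ xᵢ vᵢ vᵢᵀ = Iₙ`, nonnegative costs `c` with budget `C := ⟨c, x⟩`, and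
`ε ∈ (0, 1/2]` with `C ≥ 15 n c_∞ / ε²`, there exists `z ∈ {0,1}^m` with `⟨c, z⟩ ≤ C`
and `∑ zᵢ vᵢ vᵢᵀ ⪰ (1 - 4ε) Iₙ`. -/
theorem one_sided_spectral_rounding_budget :
    ∃ n₀ : ℕ, ∀ n : ℕ, n₀ ≤ n →
      ∀ (m : ℕ) (v : Fin m → Fin n → ℝ) (x c : Fin m → ℝ) (ε : ℝ),
        (∀ i, 0 ≤ x i ∧ x i ≤ 1) →
        (∑ i, x i • vecMulVec (v i) (v i)) = (1 : Matrix (Fin n) (Fin n) ℝ) →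
        (∀ i, 0 ≤ c i) →
        0 < ε → ε ≤ 1/2 →
        15 * n * (⨆ i, c i) / ε^2 ≤ (∑ i, c i * x i) →
        ∃ z : Fin m → ℝ, (∀ i, z i = 0 ∨ z i = 1) ∧
          (∑ i, c i * z i) ≤ (∑ i, c i * x i) ∧
          ((∑ i, z i • vecMulVec (v i) (v i)) -
            (1 - 4*ε) • (1 : Matrix (Fin n) (Fin n) ℝ)).PosSemidef :=
  ⟨0, fun n _ m v x c ε hx hI hc hε _ hC =>
    one_sided_spectral_rounding_budget_general hx hI hc hε <| hC.trans' <| by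
      have hsup : 0 ≤ ⨆ i, c i := Real.iSup_nonneg hc
      rw [Fintype.card_fin]
      gcongr <;> linarith [n.cast_nonneg (α := ℝ), sq_nonneg ε]⟩
end
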